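/- Let H be a quasi-Hopf algebra and (𝔄, ρ, Φ_ρ) a right H-comodule algebra. Then 𝒰 = H⊗𝔄 is a two-sided (𝔄,H)-Hopf module with structure maps h≻(h'⊗a) = hh'⊗a, (h⊗a)≺a' = h⊗aa', and ρ_𝒰(h⊗a) = ∑ h₁S⁻¹(q²_L X̃³₂ g²) ⊗ X̃¹ a⟨0⟩ ⊗ h₂S⁻¹(q¹_L X̃³₁ g¹) X̃² a⟨1⟩, where Φ_ρ = ∑X̃¹⊗X̃²⊗X̃³, q_L = ∑S(x¹)αx²⊗x³, and f⁻¹ = ∑g¹⊗g² is the inverse of the Drinfeld twist. -/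

import Mathlib

open TensorProduct Finset

noncomputable section

/-- A quasi-bialgebra in the sense of Drinfeld, together with chosen finite
Sweedler-type families representing the comultiplication and the reassociator. -/
structure QuasiBialgebra (k : Type*) [Field k] (H : Type*) [Ring H] [Algebra k H] where
  comul : H →ₐ[k] H ⊗[k] H
  counit : H →ₐ[k] k
  nD : ℕ
  D1 : H → ℕ → H
  D2 : H → ℕ → H
  hcomul : ∀ h, comul h = ∑ i ∈ range nD, D1 h i ⊗ₜ[k] D2 h i
  nP : ℕ
  X1 : ℕ → H
  X2 : ℕ → H
  X3 : ℕ → H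
  nQ : ℕ
  x1 : ℕ → H
  x2 : ℕ → H
  x3 : ℕ → H
  P_inv : ∑ s ∈ range nP, ∑ q ∈ range nQ,
      (X1 s * x1 q) ⊗ₜ[k] ((X2 s * x2 q) ⊗ₜ[k] (X3 s * x3 q)) =
      (1 : H) ⊗ₜ[k] ((1 : H) ⊗ₜ[k] (1 : H))
  inv_P : ∑ q ∈ range nQ, ∑ s ∈ range nP,
      (x1 q * X1 s) ⊗ₜ[k] ((x2 q * X2 s) ⊗ₜ[k] (x3 q * X3 s)) =
      (1 : H) ⊗ₜ[k] ((1 : H) ⊗ₜ[k] (1 : H))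
  coassoc : ∀ h : H,
    ∑ i ∈ range nD, ∑ j ∈ range nD,
      D1 h i ⊗ₜ[k] (D1 (D2 h i) j ⊗ₜ[k] D2 (D2 h i) j) =
    ∑ s ∈ range nP, ∑ i ∈ range nD, ∑ j ∈ range nD, ∑ q ∈ range nQ,
      (X1 s * D1 (D1 h i) j * x1 q) ⊗ₜ[k]
        ((X2 s * D2 (D1 h i) j * x2 q) ⊗ₜ[k] (X3 s * D2 h i * x3 q))
  counit_r : ∀ h : H, ∑ i ∈ range nD, counit (D2 h i) • D1 h i = h
  counit_l : ∀ h : H, ∑ i ∈ range nD, counit (D1 h i) • D2 h i = h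
  pentagon :
    ∑ p ∈ range nP, ∑ s ∈ range nP, ∑ l ∈ range nD, ∑ r ∈ range nP,
      (X1 s * X1 r) ⊗ₜ[k] ((X1 p * D1 (X2 s) l * X2 r) ⊗ₜ[k]
        ((X2 p * D2 (X2 s) l * X3 r) ⊗ₜ[k] (X3 p * X3 s))) =
    ∑ p ∈ range nP, ∑ s ∈ range nP, ∑ l ∈ range nD, ∑ j ∈ range nD,
      (X1 p * D1 (X1 s) j) ⊗ₜ[k] ((X2 p * D2 (X1 s) j) ⊗ₜ[k]
        ((D1 (X3 p) l * X2 s) ⊗ₜ[k] (D2 (X3 p) l * X3 s)))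
  normal : ∑ s ∈ range nP, counit (X2 s) • (X1 s ⊗ₜ[k] X3 s) = (1 : H) ⊗ₜ[k] (1 : H)

/-- A quasi-Hopf algebra: a quasi-bialgebra with an anti-automorphism `S`
and elements `aE = α`, `bE = β` satisfying the antipode axioms. -/
structure QuasiHopfAlgebra (k : Type*) [Field k] (H : Type*) [Ring H] [Algebra k H]
    extends QuasiBialgebra k H where
  S : H →ₗ[k] H
  Sinv : H →ₗ[k] H
  S_Sinv : ∀ h, S (Sinv h) = h
  Sinv_S : ∀ h, Sinv (S h) = h
  S_one : S 1 = 1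
  S_mul : ∀ g h : H, S (g * h) = S h * S g
  aE : H
  bE : H
  antip_l : ∀ h, ∑ i ∈ range nD, S (D1 h i) * aE * D2 h i = counit h • aE
  antip_r : ∀ h, ∑ i ∈ range nD, D1 h i * bE * S (D2 h i) = counit h • bE
  antip_X : ∑ s ∈ range nP, X1 s * bE * S (X2 s) * aE * X3 s = 1
  antip_x : ∑ q ∈ range nQ, S (x1 q) * aE * x2 q * bE * S (x3 q) = 1

/-- The Drinfeld twist `f` of a quasi-Hopf algebra, given by families `f₁ ⊗ f₂`
with inverse `g₁ ⊗ g₂`, together with its defining formula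
`f = ∑ (S⊗S)(Δᵒᵖ(x¹)) γ Δ(x²βS(x³))`, `γ = ∑ S(A²)αA³ ⊗ S(A¹)αA⁴`,
`∑A¹⊗A²⊗A³⊗A⁴ = (Φ⊗1)(Δ⊗id⊗id)(Φ⁻¹)`. -/
structure DrinfeldTwist {k : Type*} [Field k] {H : Type*} [Ring H] [Algebra k H]
    (QH : QuasiHopfAlgebra k H) where
  nf : ℕ
  f1 : ℕ → H
  f2 : ℕ → H
  g1 : ℕ → H
  g2 : ℕ → H
  f_inv : ∑ t ∈ range nf, ∑ u ∈ range nf,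
      (f1 t * g1 u) ⊗ₜ[k] (f2 t * g2 u) = (1 : H) ⊗ₜ[k] (1 : H)
  inv_f : ∑ u ∈ range nf, ∑ t ∈ range nf,
      (g1 u * f1 t) ⊗ₜ[k] (g2 u * f2 t) = (1 : H) ⊗ₜ[k] (1 : H)
  h_f : ∑ t ∈ range nf, f1 t ⊗ₜ[k] f2 t =
    ∑ j ∈ range QH.nQ, ∑ l ∈ range QH.nD, ∑ p ∈ range QH.nP, ∑ j' ∈ range QH.nQ,
      ∑ l' ∈ range QH.nD, ∑ l'' ∈ range QH.nD,
      (QH.S (QH.D2 (QH.x1 j) l) *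
          (QH.S (QH.X2 p * QH.D2 (QH.x1 j') l') * QH.aE * (QH.X3 p * QH.x2 j')) *
          QH.D1 (QH.x2 j * QH.bE * QH.S (QH.x3 j)) l'') ⊗ₜ[k]
        (QH.S (QH.D1 (QH.x1 j) l) *
          (QH.S (QH.X1 p * QH.D1 (QH.x1 j') l') * QH.aE * QH.x3 j') *
          QH.D2 (QH.x2 j * QH.bE * QH.S (QH.x3 j)) l'')

/-- A right `H`-comodule algebra over a quasi-bialgebra, with Sweedler families. -/
structure RightComoduleAlgebra {k : Type*} [Field k] {H : Type*} [Ring H] [Algebra k H]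
    (QB : QuasiBialgebra k H) (A : Type*) [Ring A] [Algebra k A] where
  rho : A →ₐ[k] A ⊗[k] H
  nR : ℕ
  r0 : A → ℕ → A
  r1 : A → ℕ → H
  hrho : ∀ a, rho a = ∑ i ∈ range nR, r0 a i ⊗ₜ[k] r1 a i
  nP : ℕ
  P1 : ℕ → A
  P2 : ℕ → H
  P3 : ℕ → H
  nQ : ℕ
  Q1 : ℕ → A
  Q2 : ℕ → H
  Q3 : ℕ → H
  P_inv : ∑ s ∈ range nP, ∑ q ∈ range nQ,
      (P1 s * Q1 q) ⊗ₜ[k] ((P2 s * Q2 q) ⊗ₜ[k] (P3 s * Q3 q)) =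
      (1 : A) ⊗ₜ[k] ((1 : H) ⊗ₜ[k] (1 : H))
  inv_P : ∑ q ∈ range nQ, ∑ s ∈ range nP,
      (Q1 q * P1 s) ⊗ₜ[k] ((Q2 q * P2 s) ⊗ₜ[k] (Q3 q * P3 s)) =
      (1 : A) ⊗ₜ[k] ((1 : H) ⊗ₜ[k] (1 : H))
  rca1 : ∀ a : A,
    ∑ s ∈ range nP, ∑ i ∈ range nR, ∑ j ∈ range nR,
      (P1 s * r0 (r0 a i) j) ⊗ₜ[k] ((P2 s * r1 (r0 a i) j) ⊗ₜ[k] (P3 s * r1 a i)) =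
    ∑ i ∈ range nR, ∑ l ∈ range QB.nD, ∑ s ∈ range nP,
      (r0 a i * P1 s) ⊗ₜ[k] ((QB.D1 (r1 a i) l * P2 s) ⊗ₜ[k] (QB.D2 (r1 a i) l * P3 s))
  rca2 :
    ∑ s ∈ range QB.nP, ∑ i ∈ range nP, ∑ l ∈ range QB.nD, ∑ j ∈ range nP,
      (P1 i * P1 j) ⊗ₜ[k] ((QB.X1 s * QB.D1 (P2 i) l * P2 j) ⊗ₜ[k]
        ((QB.X2 s * QB.D2 (P2 i) l * P3 j) ⊗ₜ[k] (QB.X3 s * P3 i))) =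
    ∑ i ∈ range nP, ∑ l ∈ range QB.nD, ∑ j ∈ range nP, ∑ u ∈ range nR,
      (P1 i * r0 (P1 j) u) ⊗ₜ[k] ((P2 i * r1 (P1 j) u) ⊗ₜ[k]
        ((QB.D1 (P3 i) l * P2 j) ⊗ₜ[k] (QB.D2 (P3 i) l * P3 j)))
  rca3 : ∀ a, ∑ i ∈ range nR, QB.counit (r1 a i) • r0 a i = a
  rca4a : ∑ s ∈ range nP, QB.counit (P2 s) • (P1 s ⊗ₜ[k] P3 s) = (1 : A) ⊗ₜ[k] (1 : H)
  rca4b : ∑ s ∈ range nP, QB.counit (P3 s) • (P1 s ⊗ₜ[k] P2 s) = (1 : A) ⊗ₜ[k] (1 : H)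

/-- A left `H`-comodule algebra over a quasi-bialgebra, with Sweedler families. -/
structure LeftComoduleAlgebra {k : Type*} [Field k] {H : Type*} [Ring H] [Algebra k H]
    (QB : QuasiBialgebra k H) (B : Type*) [Ring B] [Algebra k B] where
  lam : B →ₐ[k] H ⊗[k] B
  nL : ℕ
  l1 : B → ℕ → H
  l0 : B → ℕ → B
  hlam : ∀ b, lam b = ∑ i ∈ range nL, l1 b i ⊗ₜ[k] l0 b i
  nP : ℕ
  P1 : ℕ → H
  P2 : ℕ → H
  P3 : ℕ → B
  nQ : ℕ
  Q1 : ℕ → H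
  Q2 : ℕ → H
  Q3 : ℕ → B
  P_inv : ∑ s ∈ range nP, ∑ q ∈ range nQ,
      (P1 s * Q1 q) ⊗ₜ[k] ((P2 s * Q2 q) ⊗ₜ[k] (P3 s * Q3 q)) =
      (1 : H) ⊗ₜ[k] ((1 : H) ⊗ₜ[k] (1 : B))
  inv_P : ∑ q ∈ range nQ, ∑ s ∈ range nP,
      (Q1 q * P1 s) ⊗ₜ[k] ((Q2 q * P2 s) ⊗ₜ[k] (Q3 q * P3 s)) =
      (1 : H) ⊗ₜ[k] ((1 : H) ⊗ₜ[k] (1 : B))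
  lca1 : ∀ b : B,
    ∑ i ∈ range nL, ∑ l ∈ range nL, ∑ s ∈ range nP,
      (l1 b i * P1 s) ⊗ₜ[k] ((l1 (l0 b i) l * P2 s) ⊗ₜ[k] (l0 (l0 b i) l * P3 s)) =
    ∑ s ∈ range nP, ∑ i ∈ range nL, ∑ l ∈ range QB.nD,
      (P1 s * QB.D1 (l1 b i) l) ⊗ₜ[k] ((P2 s * QB.D2 (l1 b i) l) ⊗ₜ[k] (P3 s * l0 b i))
  lca2 :
    ∑ p ∈ range nP, ∑ s ∈ range nP, ∑ l ∈ range QB.nD, ∑ r ∈ range QB.nP,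
      (P1 s * QB.X1 r) ⊗ₜ[k] ((P1 p * QB.D1 (P2 s) l * QB.X2 r) ⊗ₜ[k]
        ((P2 p * QB.D2 (P2 s) l * QB.X3 r) ⊗ₜ[k] (P3 p * P3 s))) =
    ∑ p ∈ range nP, ∑ s ∈ range nP, ∑ j ∈ range QB.nD, ∑ l ∈ range nL,
      (P1 p * QB.D1 (P1 s) j) ⊗ₜ[k] ((P2 p * QB.D2 (P1 s) j) ⊗ₜ[k]
        ((l1 (P3 p) l * P2 s) ⊗ₜ[k] (l0 (P3 p) l * P3 s)))
  lca3 : ∀ b, ∑ i ∈ range nL, QB.counit (l1 b i) • l0 b i = b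
  lca4a : ∑ s ∈ range nP, QB.counit (P2 s) • (P1 s ⊗ₜ[k] P3 s) = (1 : H) ⊗ₜ[k] (1 : B)
  lca4b : ∑ s ∈ range nP, QB.counit (P1 s) • (P2 s ⊗ₜ[k] P3 s) = (1 : H) ⊗ₜ[k] (1 : B)

/-- An algebra in the monoidal category of left `H`-modules
(a left `H`-module algebra), on a carrier `V`. -/
structure LeftModuleAlgebra {k : Type*} [Field k] {H : Type*} [Ring H] [Algebra k H]
    (QB : QuasiBialgebra k H) (V : Type*) [AddCommMonoid V] [Module k V] where
  mul : V →ₗ[k] V →ₗ[k] V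
  one : V
  act : H →ₗ[k] V →ₗ[k] V
  act_one : ∀ v, act 1 v = v
  act_mul : ∀ g h v, act (g * h) v = act g (act h v)
  mul_one : ∀ v, mul v one = v
  one_mul : ∀ v, mul one v = v
  mul_assoc : ∀ u v w, mul (mul u v) w =
    ∑ s ∈ range QB.nP, mul (act (QB.X1 s) u) (mul (act (QB.X2 s) v) (act (QB.X3 s) w))
  act_mul_mul : ∀ h u v, act h (mul u v) =
    ∑ i ∈ range QB.nD, mul (act (QB.D1 h i) u) (act (QB.D2 h i) v)
  act_unit : ∀ h, act h one = QB.counit h • one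

/-- The right action `φ ↦ h ⇀ φ`, `(h ⇀ φ)(h') = φ(h'h)`. -/
def rA (k : Type*) [Field k] {H : Type*} [Ring H] [Algebra k H] (h : H) :
    Module.Dual k H →ₗ[k] Module.Dual k H :=
  LinearMap.lcomp k k (LinearMap.mulRight k h)

/-- The left action `φ ↦ φ ↼ h`, `(φ ↼ h)(h') = φ(hh')`. -/
def lA (k : Type*) [Field k] {H : Type*} [Ring H] [Algebra k H] (h : H) :
    Module.Dual k H →ₗ[k] Module.Dual k H :=
  LinearMap.lcomp k k (LinearMap.mulLeft k h)

/-- Convolution product on the dual of a "coalgebra" with comultiplication `DC`. -/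
def convC {k : Type*} [Field k] {C : Type*} [AddCommGroup C] [Module k C]
    (DC : C →ₗ[k] C ⊗[k] C) (φ ψ : Module.Dual k C) : Module.Dual k C :=
  (TensorProduct.lid k k).toLinearMap ∘ₗ (TensorProduct.map φ ψ) ∘ₗ DC

/-- A two-sided `(𝔄, H)`-Hopf module. -/
structure TwoSidedHopfModule {k : Type*} [Field k] {H : Type*} [Ring H] [Algebra k H]
    (QB : QuasiBialgebra k H) {A : Type*} [Ring A] [Algebra k A]
    (CA : RightComoduleAlgebra QB A) (M : Type*) [AddCommGroup M] [Module k M] where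
  ha : H →ₗ[k] M →ₗ[k] M
  ha_one : ∀ m, ha 1 m = m
  ha_mul : ∀ g h m, ha (g * h) m = ha g (ha h m)
  ra : A →ₗ[k] M →ₗ[k] M
  ra_one : ∀ m, ra 1 m = m
  ra_mul : ∀ a b m, ra (a * b) m = ra b (ra a m)
  ha_ra : ∀ h a m, ha h (ra a m) = ra a (ha h m)
  rho : M →ₗ[k] M ⊗[k] H
  counit_rho : ∀ m,
    (TensorProduct.rid k M) ((TensorProduct.map LinearMap.id QB.counit.toLinearMap) (rho m)) = m
  coassoc_rho : ∀ m,
    ∑ s ∈ range QB.nP,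
      (TensorProduct.map (ha (QB.X1 s))
        (TensorProduct.map (LinearMap.mulLeft k (QB.X2 s)) (LinearMap.mulLeft k (QB.X3 s))))
        ((TensorProduct.assoc k M H H) ((TensorProduct.map rho LinearMap.id) (rho m))) =
    ∑ j ∈ range CA.nP,
      (TensorProduct.map (ra (CA.P1 j))
        (TensorProduct.map (LinearMap.mulRight k (CA.P2 j)) (LinearMap.mulRight k (CA.P3 j))))
        ((TensorProduct.map LinearMap.id QB.comul.toLinearMap) (rho m))
  colin_l : ∀ h m, rho (ha h m) =
    ∑ i ∈ range QB.nD,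
      (TensorProduct.map (ha (QB.D1 h i)) (LinearMap.mulLeft k (QB.D2 h i))) (rho m)
  colin_r : ∀ a m, rho (ra a m) =
    ∑ i ∈ range CA.nR,
      (TensorProduct.map (ra (CA.r0 a i)) (LinearMap.mulRight k (CA.r1 a i))) (rho m)

/-- A right `(H^*, A)`-Hopf module over a left `H`-module algebra `A` (carrier `V`). -/
structure RelHopfModule {k : Type*} [Field k] {H : Type*} [Ring H] [Algebra k H]
    (QB : QuasiBialgebra k H) {V : Type*} [AddCommMonoid V] [Module k V]
    (MA : LeftModuleAlgebra QB V) (M : Type*) [AddCommGroup M] [Module k M] where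
  hb : H →ₗ[k] M →ₗ[k] M
  hb_one : ∀ m, hb 1 m = m
  hb_mul : ∀ g h m, hb (g * h) m = hb g (hb h m)
  rb : V →ₗ[k] M →ₗ[k] M
  rb_one : ∀ m, rb MA.one m = m
  rb_assoc : ∀ m u v, rb v (rb u m) =
    ∑ s ∈ range QB.nP, rb (MA.mul (MA.act (QB.X2 s) u) (MA.act (QB.X3 s) v)) (hb (QB.X1 s) m)
  hb_rb : ∀ h u m, hb h (rb u m) =
    ∑ i ∈ range QB.nD, rb (MA.act (QB.D2 h i) u) (hb (QB.D1 h i) m)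

/-- A right module over the (possibly nonassociative) algebra `(V, mul, one)`. -/
structure RightAlgModule (k : Type*) [Field k] {V : Type*} [AddCommMonoid V] [Module k V]
    (mul : V →ₗ[k] V →ₗ[k] V) (one : V) (N : Type*) [AddCommGroup N] [Module k N] where
  ract : V →ₗ[k] N →ₗ[k] N
  ract_one : ∀ n, ract one n = n
  ract_mul : ∀ u v n, ract (mul u v) n = ract v (ract u n)

/-- A left `H'`-comodule algebra structure on a carrier `V` equipped with a
(bilinear, possibly nonassociative) multiplication `mulV` and unit `oneV`. -/
structure LeftComoduleAlgebraS {k : Type*} [Field k] {H' : Type*} [Ring H'] [Algebra k H']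
    (QB : QuasiBialgebra k H') (V : Type*) [AddCommMonoid V] [Module k V]
    (mulV : V →ₗ[k] V →ₗ[k] V) (oneV : V) where
  lam : V →ₗ[k] H' ⊗[k] V
  nL : ℕ
  l1 : V → ℕ → H'
  l0 : V → ℕ → V
  hlam : ∀ v, lam v = ∑ i ∈ range nL, l1 v i ⊗ₜ[k] l0 v i
  lam_one : lam oneV = (1 : H') ⊗ₜ[k] oneV
  lam_mul : ∀ u v, lam (mulV u v) =
    ∑ i ∈ range nL, ∑ j ∈ range nL, (l1 u i * l1 v j) ⊗ₜ[k] mulV (l0 u i) (l0 v j)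
  nP : ℕ
  P1 : ℕ → H'
  P2 : ℕ → H'
  P3 : ℕ → V
  nQ : ℕ
  Q1 : ℕ → H'
  Q2 : ℕ → H'
  Q3 : ℕ → V
  P_inv : ∑ s ∈ range nP, ∑ q ∈ range nQ,
      (P1 s * Q1 q) ⊗ₜ[k] ((P2 s * Q2 q) ⊗ₜ[k] mulV (P3 s) (Q3 q)) =
      (1 : H') ⊗ₜ[k] ((1 : H') ⊗ₜ[k] oneV)
  inv_P : ∑ q ∈ range nQ, ∑ s ∈ range nP,
      (Q1 q * P1 s) ⊗ₜ[k] ((Q2 q * P2 s) ⊗ₜ[k] mulV (Q3 q) (P3 s)) =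
      (1 : H') ⊗ₜ[k] ((1 : H') ⊗ₜ[k] oneV)
  lca1 : ∀ v : V,
    ∑ i ∈ range nL, ∑ l ∈ range nL, ∑ s ∈ range nP,
      (l1 v i * P1 s) ⊗ₜ[k] ((l1 (l0 v i) l * P2 s) ⊗ₜ[k] mulV (l0 (l0 v i) l) (P3 s)) =
    ∑ s ∈ range nP, ∑ i ∈ range nL, ∑ l ∈ range QB.nD,
      (P1 s * QB.D1 (l1 v i) l) ⊗ₜ[k] ((P2 s * QB.D2 (l1 v i) l) ⊗ₜ[k] mulV (P3 s) (l0 v i))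
  lca2 :
    ∑ p ∈ range nP, ∑ s ∈ range nP, ∑ l ∈ range QB.nD, ∑ r ∈ range QB.nP,
      (P1 s * QB.X1 r) ⊗ₜ[k] ((P1 p * QB.D1 (P2 s) l * QB.X2 r) ⊗ₜ[k]
        ((P2 p * QB.D2 (P2 s) l * QB.X3 r) ⊗ₜ[k] mulV (P3 p) (P3 s))) =
    ∑ p ∈ range nP, ∑ s ∈ range nP, ∑ j ∈ range QB.nD, ∑ l ∈ range nL,
      (P1 p * QB.D1 (P1 s) j) ⊗ₜ[k] ((P2 p * QB.D2 (P1 s) j) ⊗ₜ[k]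
        ((l1 (P3 p) l * P2 s) ⊗ₜ[k] mulV (l0 (P3 p) l) (P3 s)))
  lca3 : ∀ v, ∑ i ∈ range nL, QB.counit (l1 v i) • l0 v i = v
  lca4a : ∑ s ∈ range nP, QB.counit (P2 s) • (P1 s ⊗ₜ[k] P3 s) = (1 : H') ⊗ₜ[k] oneV
  lca4b : ∑ s ∈ range nP, QB.counit (P1 s) • (P2 s ⊗ₜ[k] P3 s) = (1 : H') ⊗ₜ[k] oneV

/-- A right-left Doi-Hopf module over the quasi-bialgebra `QB'`, a left comodule
algebra (given by its carrier `V`, multiplication data and coaction families) and a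
module coalgebra `C` (given by its comultiplication `DC`, counit `eC` and right
`H'`-action `actC`). -/
structure DoiHopfModule {k : Type*} [Field k] {H' : Type*} [Ring H'] [Algebra k H']
    (QB' : QuasiBialgebra k H') {V : Type*} [AddCommMonoid V] [Module k V]
    (mulV : V →ₗ[k] V →ₗ[k] V) (oneV : V)
    (nL : ℕ) (l1 : V → ℕ → H') (l0 : V → ℕ → V)
    (nPl : ℕ) (Pl1 Pl2 : ℕ → H') (Pl3 : ℕ → V)
    {C : Type*} [AddCommGroup C] [Module k C]
    (DC : C →ₗ[k] C ⊗[k] C) (eC : C →ₗ[k] k) (actC : H' →ₗ[k] C →ₗ[k] C)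
    (N : Type*) [AddCommGroup N] [Module k N] where
  ract : V →ₗ[k] N →ₗ[k] N
  ract_one : ∀ n, ract oneV n = n
  ract_mul : ∀ u v n, ract (mulV u v) n = ract v (ract u n)
  rhoN : N →ₗ[k] C ⊗[k] N
  dh2 : ∀ n, (TensorProduct.lid k N) ((TensorProduct.map eC LinearMap.id) (rhoN n)) = n
  dh1 : ∀ n,
    (TensorProduct.assoc k C C N) ((TensorProduct.map DC LinearMap.id) (rhoN n)) =
    ∑ j ∈ range nPl,
      (TensorProduct.map (actC (Pl1 j)) (TensorProduct.map (actC (Pl2 j)) (ract (Pl3 j))))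
        ((TensorProduct.map LinearMap.id rhoN) (rhoN n))
  dh3 : ∀ v n, rhoN (ract v n) =
    ∑ w ∈ range nL, (TensorProduct.map (actC (l1 v w)) (ract (l0 v w))) (rhoN n)

/-- A right `H`-module coalgebra, with Sweedler families for the comultiplication. -/
structure RightModuleCoalgebra {k : Type*} [Field k] {H : Type*} [Ring H] [Algebra k H]
    (QB : QuasiBialgebra k H) (C : Type*) [AddCommGroup C] [Module k C] where
  act : H →ₗ[k] C →ₗ[k] C
  act_one : ∀ c, act 1 c = c
  act_mul : ∀ g h c, act (g * h) c = act h (act g c)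
  DC : C →ₗ[k] C ⊗[k] C
  nC : ℕ
  C1 : C → ℕ → C
  C2 : C → ℕ → C
  hDC : ∀ c, DC c = ∑ i ∈ range nC, C1 c i ⊗ₜ[k] C2 c i
  eC : C →ₗ[k] k
  counit_l : ∀ c, ∑ i ∈ range nC, eC (C1 c i) • C2 c i = c
  counit_r : ∀ c, ∑ i ∈ range nC, eC (C2 c i) • C1 c i = c
  rmc1 : ∀ c : C,
    ∑ i ∈ range nC, ∑ j ∈ range nC, ∑ q ∈ range QB.nQ,
      act (QB.x1 q) (C1 (C1 c i) j) ⊗ₜ[k]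
        (act (QB.x2 q) (C2 (C1 c i) j) ⊗ₜ[k] act (QB.x3 q) (C2 c i)) =
    ∑ i ∈ range nC, ∑ j ∈ range nC,
      C1 c i ⊗ₜ[k] (C1 (C2 c i) j ⊗ₜ[k] C2 (C2 c i) j)
  rmc2 : ∀ c h,
    ∑ i ∈ range nC, C1 (act h c) i ⊗ₜ[k] C2 (act h c) i =
    ∑ i ∈ range nC, ∑ l ∈ range QB.nD,
      act (QB.D1 h l) (C1 c i) ⊗ₜ[k] act (QB.D2 h l) (C2 c i)
  rmc3 : ∀ c h, eC (act h c) = eC c * QB.counit h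

/-- An `H`-bimodule coalgebra: a coalgebra in the monoidal category of
`(H,H)`-bimodules, with Sweedler families. -/
structure HBimoduleCoalgebra {k : Type*} [Field k] {H : Type*} [Ring H] [Algebra k H]
    (QB : QuasiBialgebra k H) (C : Type*) [AddCommGroup C] [Module k C] where
  lact : H →ₗ[k] C →ₗ[k] C
  lact_one : ∀ c, lact 1 c = c
  lact_mul : ∀ g h c, lact (g * h) c = lact g (lact h c)
  ract : H →ₗ[k] C →ₗ[k] C
  ract_one : ∀ c, ract 1 c = c
  ract_mul : ∀ g h c, ract (g * h) c = ract h (ract g c)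
  lact_ract : ∀ g h c, lact g (ract h c) = ract h (lact g c)
  DC : C →ₗ[k] C ⊗[k] C
  nC : ℕ
  C1 : C → ℕ → C
  C2 : C → ℕ → C
  hDC : ∀ c, DC c = ∑ i ∈ range nC, C1 c i ⊗ₜ[k] C2 c i
  eC : C →ₗ[k] k
  counit_l : ∀ c, ∑ i ∈ range nC, eC (C1 c i) • C2 c i = c
  counit_r : ∀ c, ∑ i ∈ range nC, eC (C2 c i) • C1 c i = c
  bmc1 : ∀ c : C,
    ∑ s ∈ range QB.nP, ∑ i ∈ range nC, ∑ j ∈ range nC, ∑ q ∈ range QB.nQ,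
      lact (QB.X1 s) (ract (QB.x1 q) (C1 (C1 c i) j)) ⊗ₜ[k]
        (lact (QB.X2 s) (ract (QB.x2 q) (C2 (C1 c i) j)) ⊗ₜ[k]
          lact (QB.X3 s) (ract (QB.x3 q) (C2 c i))) =
    ∑ i ∈ range nC, ∑ j ∈ range nC,
      C1 c i ⊗ₜ[k] (C1 (C2 c i) j ⊗ₜ[k] C2 (C2 c i) j)
  bmc2l : ∀ c h,
    ∑ i ∈ range nC, C1 (lact h c) i ⊗ₜ[k] C2 (lact h c) i =
    ∑ l ∈ range QB.nD, ∑ i ∈ range nC,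
      lact (QB.D1 h l) (C1 c i) ⊗ₜ[k] lact (QB.D2 h l) (C2 c i)
  bmc2r : ∀ c h,
    ∑ i ∈ range nC, C1 (ract h c) i ⊗ₜ[k] C2 (ract h c) i =
    ∑ l ∈ range QB.nD, ∑ i ∈ range nC,
      ract (QB.D1 h l) (C1 c i) ⊗ₜ[k] ract (QB.D2 h l) (C2 c i)
  bmc3l : ∀ c h, eC (lact h c) = QB.counit h * eC c
  bmc3r : ∀ c h, eC (ract h c) = eC c * QB.counit h

/-- An `H`-bicomodule algebra `(𝔸, λ, ρ, Φ_λ, Φ_ρ, Φ_{λ,ρ})`. -/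
structure BicomoduleAlgebra {k : Type*} [Field k] {H : Type*} [Ring H] [Algebra k H]
    (QB : QuasiBialgebra k H) (A : Type*) [Ring A] [Algebra k A] where
  rca : RightComoduleAlgebra QB A
  lca : LeftComoduleAlgebra QB A
  nO : ℕ
  O1 : ℕ → H
  O2 : ℕ → A
  O3 : ℕ → H
  nW : ℕ
  w1 : ℕ → H
  w2 : ℕ → A
  w3 : ℕ → H
  O_inv : ∑ v ∈ range nO, ∑ w ∈ range nW,
      (O1 v * w1 w) ⊗ₜ[k] ((O2 v * w2 w) ⊗ₜ[k] (O3 v * w3 w)) =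
      (1 : H) ⊗ₜ[k] ((1 : A) ⊗ₜ[k] (1 : H))
  inv_O : ∑ w ∈ range nW, ∑ v ∈ range nO,
      (w1 w * O1 v) ⊗ₜ[k] ((w2 w * O2 v) ⊗ₜ[k] (w3 w * O3 v)) =
      (1 : H) ⊗ₜ[k] ((1 : A) ⊗ₜ[k] (1 : H))
  bca1 : ∀ a : A,
    ∑ v ∈ range nO, ∑ r ∈ range rca.nR, ∑ l ∈ range lca.nL,
      (O1 v * lca.l1 (rca.r0 a r) l) ⊗ₜ[k]
        ((O2 v * lca.l0 (rca.r0 a r) l) ⊗ₜ[k] (O3 v * rca.r1 a r)) =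
    ∑ l ∈ range lca.nL, ∑ r ∈ range rca.nR, ∑ v ∈ range nO,
      (lca.l1 a l * O1 v) ⊗ₜ[k]
        ((rca.r0 (lca.l0 a l) r * O2 v) ⊗ₜ[k] (rca.r1 (lca.l0 a l) r * O3 v))
  bca2 :
    ∑ v ∈ range nO, ∑ v' ∈ range nO, ∑ l ∈ range lca.nL, ∑ j ∈ range lca.nP,
      (O1 v' * lca.P1 j) ⊗ₜ[k] ((O1 v * lca.l1 (O2 v') l * lca.P2 j) ⊗ₜ[k]
        ((O2 v * lca.l0 (O2 v') l * lca.P3 j) ⊗ₜ[k] (O3 v * O3 v'))) =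
    ∑ j ∈ range lca.nP, ∑ v ∈ range nO, ∑ i ∈ range QB.nD, ∑ r ∈ range rca.nR,
      (lca.P1 j * QB.D1 (O1 v) i) ⊗ₜ[k] ((lca.P2 j * QB.D2 (O1 v) i) ⊗ₜ[k]
        ((rca.r0 (lca.P3 j) r * O2 v) ⊗ₜ[k] (rca.r1 (lca.P3 j) r * O3 v)))
  bca3 :
    ∑ s ∈ range rca.nP, ∑ v ∈ range nO, ∑ r ∈ range rca.nR, ∑ v' ∈ range nO,
      (O1 v * O1 v') ⊗ₜ[k] ((rca.P1 s * rca.r0 (O2 v) r * O2 v') ⊗ₜ[k]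
        ((rca.P2 s * rca.r1 (O2 v) r * O3 v') ⊗ₜ[k] (rca.P3 s * O3 v))) =
    ∑ v ∈ range nO, ∑ i ∈ range QB.nD, ∑ s ∈ range rca.nP, ∑ l ∈ range lca.nL,
      (O1 v * lca.l1 (rca.P1 s) l) ⊗ₜ[k] ((O2 v * lca.l0 (rca.P1 s) l) ⊗ₜ[k]
        ((QB.D1 (O3 v) i * rca.P2 s) ⊗ₜ[k] (QB.D2 (O3 v) i * rca.P3 s)))

/-- A two-sided two-cosided `(H, 𝔸, C)`-Hopf module. -/
structure TwoSidedTwoCosided {k : Type*} [Field k] {H : Type*} [Ring H] [Algebra k H]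
    (QB : QuasiBialgebra k H) {A : Type*} [Ring A] [Algebra k A]
    (BA : BicomoduleAlgebra QB A) {C : Type*} [AddCommGroup C] [Module k C]
    (lactC ractC : H →ₗ[k] C →ₗ[k] C) (DC : C →ₗ[k] C ⊗[k] C) (eC : C →ₗ[k] k)
    (N : Type*) [AddCommGroup N] [Module k N]
    extends TwoSidedHopfModule QB BA.rca N where
  rhoC : N →ₗ[k] C ⊗[k] N
  counit_rhoC : ∀ n,
    (TensorProduct.lid k N) ((TensorProduct.map eC LinearMap.id) (rhoC n)) = n
  tstc1 : ∀ n,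
    ∑ s ∈ range QB.nP,
      (TensorProduct.map (lactC (QB.X1 s))
        (TensorProduct.map (lactC (QB.X2 s)) (ha (QB.X3 s))))
        ((TensorProduct.assoc k C C N) ((TensorProduct.map DC LinearMap.id) (rhoC n))) =
    ∑ j ∈ range BA.lca.nP,
      (TensorProduct.map (ractC (BA.lca.P1 j))
        (TensorProduct.map (ractC (BA.lca.P2 j)) (ra (BA.lca.P3 j))))
        ((TensorProduct.map LinearMap.id rhoC) (rhoC n))
  tstc2 : ∀ n,
    ∑ s ∈ range QB.nP,
      (TensorProduct.map (lactC (QB.X1 s))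
        (TensorProduct.map (ha (QB.X2 s)) (LinearMap.mulLeft k (QB.X3 s))))
        ((TensorProduct.assoc k C N H) ((TensorProduct.map rhoC LinearMap.id) (rho n))) =
    ∑ v ∈ range BA.nO,
      (TensorProduct.map (ractC (BA.O1 v))
        (TensorProduct.map (ra (BA.O2 v)) (LinearMap.mulRight k (BA.O3 v))))
        ((TensorProduct.map LinearMap.id rho) (rhoC n))
  tstc3 : ∀ h n, rhoC (ha h n) =
    ∑ i ∈ range QB.nD,
      (TensorProduct.map (lactC (QB.D1 h i)) (ha (QB.D2 h i))) (rhoC n)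
  tstc4 : ∀ a n, rhoC (ra a n) =
    ∑ l ∈ range BA.lca.nL,
      (TensorProduct.map (ractC (BA.lca.l1 a l)) (ra (BA.lca.l0 a l))) (rhoC n)

namespace Finset

variable {α β γ δ M : Type*} [AddCommMonoid M] (s : Finset α) (t : Finset β) (u : Finset γ)
  (v : Finset δ)

theorem sum_rotate_three (F : α → β → γ → M) :
    ∑ a ∈ s, ∑ b ∈ t, ∑ c ∈ u, F a b c = ∑ b ∈ t, ∑ c ∈ u, ∑ a ∈ s, F a b c := by
  rw [sum_comm]
  exact sum_congr rfl fun b _ => sum_comm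

theorem sum_rotate_four (F : α → β → γ → δ → M) :
    ∑ a ∈ s, ∑ b ∈ t, ∑ c ∈ u, ∑ d ∈ v, F a b c d =
      ∑ b ∈ t, ∑ c ∈ u, ∑ d ∈ v, ∑ a ∈ s, F a b c d := by
  rw [sum_comm]
  exact sum_congr rfl fun b _ => sum_rotate_three _ _ _ _

theorem sum_swap_outer_inner (F : α → β → γ → δ → M) :
    ∑ a ∈ s, ∑ b ∈ t, ∑ c ∈ u, ∑ d ∈ v, F a b c d =
      ∑ d ∈ v, ∑ b ∈ t, ∑ c ∈ u, ∑ a ∈ s, F a b c d := by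
  rw [sum_rotate_four, ← sum_rotate_three]

theorem sum_rotate_four_three (F : α → β → γ → δ → M) :
    ∑ a ∈ s, ∑ b ∈ t, ∑ c ∈ u, ∑ d ∈ v, F a b c d =
      ∑ b ∈ t, ∑ d ∈ v, ∑ a ∈ s, ∑ c ∈ u, F a b c d := by
  rw [sum_rotate_four]
  exact sum_congr rfl fun b _ => sum_rotate_three _ _ _ _

end Finset

namespace TensorProduct

variable {k : Type*} [CommSemiring k]

section Induction

variable {A B C D : Type*} [AddCommMonoid A] [Module k A] [AddCommMonoid B] [Module k B]
  [AddCommMonoid C] [Module k C] [AddCommMonoid D] [Module k D]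

theorem induction_on_three {p : A ⊗[k] (B ⊗[k] C) → Prop} (u : A ⊗[k] (B ⊗[k] C)) (zero : p 0)
    (tmul : ∀ a b c, p (a ⊗ₜ (b ⊗ₜ c))) (add : ∀ x y, p x → p y → p (x + y)) : p u := by
  induction u using TensorProduct.induction_on with
  | zero => exact zero
  | add x y hx hy => exact add x y hx hy
  | tmul a v =>
    induction v using TensorProduct.induction_on with
    | zero => simpa using zero
    | add x y hx hy => rw [tmul_add]; exact add _ _ hx hy
    | tmul b c => exact tmul a b c

theorem induction_on_four {p : A ⊗[k] (B ⊗[k] (C ⊗[k] D)) → Prop}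
    (u : A ⊗[k] (B ⊗[k] (C ⊗[k] D))) (zero : p 0)
    (tmul : ∀ a b c d, p (a ⊗ₜ (b ⊗ₜ (c ⊗ₜ d)))) (add : ∀ x y, p x → p y → p (x + y)) : p u := by
  induction u using TensorProduct.induction_on with
  | zero => exact zero
  | add x y hx hy => exact add x y hx hy
  | tmul a v =>
    induction v using induction_on_three with
    | zero => simpa using zero
    | add x y hx hy => rw [tmul_add]; exact add _ _ hx hy
    | tmul b c d => exact tmul a b c d

end Induction

section Sandwich

variable {P Q B : Type*} [AddCommMonoid P] [Module k P] [AddCommMonoid Q] [Module k Q]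
  [Semiring B] [Algebra k B]

/-- The linear map `p ⊗ q ↦ l p * T * r q`. -/
def sandwich (l : P →ₗ[k] B) (T : B) (r : Q →ₗ[k] B) : P ⊗[k] Q →ₗ[k] B :=
  LinearMap.mul' k B ∘ₗ TensorProduct.map (LinearMap.mulRight k T ∘ₗ l) r

@[simp] theorem sandwich_tmul (l : P →ₗ[k] B) (T : B) (r : Q →ₗ[k] B) (p : P) (q : Q) :
    sandwich l T r (p ⊗ₜ q) = l p * T * r q := rfl

/-- The linear map `p ⊗ q ↦ l q * T * r p`. -/
def sandwichSwap (l : Q →ₗ[k] B) (T : B) (r : P →ₗ[k] B) : P ⊗[k] Q →ₗ[k] B :=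
  sandwich l T r ∘ₗ (TensorProduct.comm k P Q).toLinearMap

@[simp] theorem sandwichSwap_tmul (l : Q →ₗ[k] B) (T : B) (r : P →ₗ[k] B) (p : P) (q : Q) :
    sandwichSwap l T r (p ⊗ₜ q) = l q * T * r p := rfl

end Sandwich

section Legs

variable {A B C D : Type*} [Semiring A] [Algebra k A] [Semiring B] [Algebra k B]
  [Semiring C] [Algebra k C] [Semiring D] [Algebra k D]

variable (A) in
/-- Apply an algebra map to all legs but the first. -/
def onTail (δ : B →ₐ[k] C) : A ⊗[k] B →ₐ[k] A ⊗[k] C :=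
  Algebra.TensorProduct.map (AlgHom.id k A) δ

@[simp] theorem onTail_tmul (δ : B →ₐ[k] C) (a : A) (b : B) :
    onTail A δ (a ⊗ₜ b) = a ⊗ₜ δ b := rfl

variable (k B C D) in
/-- Append a unit as an additional last leg: `b ⊗ c ↦ b ⊗ (c ⊗ 1)`. -/
def appendOne : B ⊗[k] C →ₐ[k] B ⊗[k] (C ⊗[k] D) :=
  onTail B Algebra.TensorProduct.includeLeft

@[simp] theorem appendOne_tmul (b : B) (c : C) :
    appendOne k B C D (b ⊗ₜ c) = b ⊗ₜ (c ⊗ₜ 1) := rfl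

variable (D) in
/-- Apply a coproduct-like algebra map to the first leg. -/
def onHead (δ : A →ₐ[k] B ⊗[k] C) : A ⊗[k] D →ₐ[k] B ⊗[k] (C ⊗[k] D) :=
  (Algebra.TensorProduct.assoc k k k B C D).toAlgHom.comp
    (Algebra.TensorProduct.map δ (AlgHom.id k D))

theorem onHead_tmul_eq_assoc (δ : A →ₐ[k] B ⊗[k] C) (a : A) (d : D) :
    onHead D δ (a ⊗ₜ d) = TensorProduct.assoc k B C D (δ a ⊗ₜ d) := rfl

theorem assoc_tmul_eq_appendOne_mul (v : B ⊗[k] C) (d : D) :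
    TensorProduct.assoc k B C D (v ⊗ₜ d) = appendOne k B C D v * (1 ⊗ₜ (1 ⊗ₜ d)) := by
  induction v using TensorProduct.induction_on with
  | zero => simp
  | add x y hx hy => simp only [add_tmul, map_add, add_mul, hx, hy]
  | tmul b c => simp

theorem onHead_tmul (δ : A →ₐ[k] B ⊗[k] C) (a : A) (d : D) :
    onHead D δ (a ⊗ₜ d) = appendOne k B C D (δ a) * (1 ⊗ₜ (1 ⊗ₜ d)) := by
  rw [onHead_tmul_eq_assoc, assoc_tmul_eq_appendOne_mul]

end Legs

end TensorProduct

namespace QuasiBialgebra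

open Algebra.TensorProduct (includeLeft includeRight)

variable {k : Type*} [Field k] {H : Type*} [Ring H] [Algebra k H] (QB : QuasiBialgebra k H)

/-- The reassociator. -/
def reassoc : H ⊗[k] (H ⊗[k] H) :=
  ∑ s ∈ range QB.nP, QB.X1 s ⊗ₜ (QB.X2 s ⊗ₜ QB.X3 s)

/-- The inverse of the reassociator. -/
def reassocInv : H ⊗[k] (H ⊗[k] H) :=
  ∑ q ∈ range QB.nQ, QB.x1 q ⊗ₜ (QB.x2 q ⊗ₜ QB.x3 q)

theorem reassoc_mul_reassocInv : QB.reassoc * QB.reassocInv = 1 := by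
  rw [reassoc, reassocInv, Finset.sum_mul_sum]
  simpa [Algebra.TensorProduct.one_def] using QB.P_inv

theorem reassocInv_mul_reassoc : QB.reassocInv * QB.reassoc = 1 := by
  rw [reassoc, reassocInv, Finset.sum_mul_sum]
  simpa [Algebra.TensorProduct.one_def] using QB.inv_P

theorem onTail_comul_comul (h : H) :
    onTail H QB.comul (QB.comul h) =
      QB.reassoc * onHead H QB.comul (QB.comul h) * QB.reassocInv := by
  have e : onTail H QB.comul (QB.comul h) = ∑ i ∈ range QB.nD, ∑ j ∈ range QB.nD,
      QB.D1 h i ⊗ₜ[k] (QB.D1 (QB.D2 h i) j ⊗ₜ[k] QB.D2 (QB.D2 h i) j) := by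
    simp [QB.hcomul, tmul_sum]
  rw [e, QB.coassoc]
  simp only [reassoc, reassocInv, QB.hcomul, map_sum, onHead_tmul_eq_assoc, sum_tmul, assoc_tmul,
    Algebra.TensorProduct.tmul_mul_tmul, Finset.sum_mul, Finset.mul_sum]
  exact Finset.sum_swap_outer_inner _ _ _ _ _

theorem onTail_comul_mul_reassoc (h : H) :
    onTail H QB.comul (QB.comul h) * QB.reassoc = QB.reassoc * onHead H QB.comul (QB.comul h) := by
  rw [onTail_comul_comul, mul_assoc, reassocInv_mul_reassoc, mul_one]

theorem reassocInv_mul_onTail_comul (h : H) :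
    QB.reassocInv * onTail H QB.comul (QB.comul h) =
      onHead H QB.comul (QB.comul h) * QB.reassocInv := by
  rw [onTail_comul_comul, mul_assoc, ← mul_assoc, reassocInv_mul_reassoc, one_mul]

theorem pentagon_reassoc :
    includeRight QB.reassoc * onTail H (onHead H QB.comul) QB.reassoc *
        onTail H (appendOne k H H H) QB.reassoc =
      onTail H (onTail H QB.comul) QB.reassoc * onHead (H ⊗[k] H) QB.comul QB.reassoc := by
  have e := QB.pentagon
  simp only [reassoc, QB.hcomul, map_sum, onTail_tmul, Algebra.TensorProduct.includeRight_apply,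
    onHead_tmul_eq_assoc, sum_tmul, tmul_sum, assoc_tmul, appendOne_tmul, Finset.sum_mul,
    Finset.mul_sum, Algebra.TensorProduct.tmul_mul_tmul, one_mul, mul_one]
  exact (Finset.sum_swap_outer_inner _ _ _ _ _).symm.trans
    (e.trans (Finset.sum_rotate_four_three _ _ _ _ _))

section Counit

variable {B C : Type*} [Ring B] [Algebra k B] [Ring C] [Algebra k C]

variable (B) in
/-- Apply the counit to the first leg. -/
def counitHead : H ⊗[k] B →ₐ[k] B :=
  (Algebra.TensorProduct.lid k B).toAlgHom.comp
    (Algebra.TensorProduct.map QB.counit (AlgHom.id k B))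

variable (B) in
/-- Apply the counit to the last of two legs. -/
def counitLast : B ⊗[k] H →ₐ[k] B :=
  (Algebra.TensorProduct.rid k k B).toAlgHom.comp
    (Algebra.TensorProduct.map (AlgHom.id k B) QB.counit)

@[simp] theorem counitHead_tmul (h : H) (b : B) :
    QB.counitHead B (h ⊗ₜ b) = QB.counit h • b := rfl

@[simp] theorem counitLast_tmul (b : B) (h : H) :
    QB.counitLast B (b ⊗ₜ h) = QB.counit h • b := rfl

@[simp] theorem counitHead_comul (h : H) : QB.counitHead H (QB.comul h) = h := by
  simpa [QB.hcomul] using QB.counit_l h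

@[simp] theorem counitLast_comul (h : H) : QB.counitLast H (QB.comul h) = h := by
  simpa [QB.hcomul] using QB.counit_r h

theorem onTail_counitHead_appendOne (v : B ⊗[k] H) :
    onTail B (QB.counitHead C) (appendOne k B H C v) = QB.counitLast B v ⊗ₜ 1 := by
  induction v using TensorProduct.induction_on with
  | zero => simp
  | add x y hx hy => simp only [map_add, add_tmul, hx, hy]
  | tmul b c => simp [smul_tmul]

theorem counitHead_appendOne (v : H ⊗[k] B) :
    QB.counitHead (B ⊗[k] C) (appendOne k H B C v) = QB.counitHead B v ⊗ₜ 1 := by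
  induction v using TensorProduct.induction_on with
  | zero => simp
  | add x y hx hy => simp only [map_add, add_tmul, hx, hy]
  | tmul b c => simp [smul_tmul']

@[simp] theorem counitHead_onHead_comul (v : H ⊗[k] B) :
    QB.counitHead (H ⊗[k] B) (onHead B QB.comul v) = v := by
  induction v using TensorProduct.induction_on with
  | zero => simp
  | add x y hx hy => simp only [map_add, hx, hy]
  | tmul b c => simp [onHead_tmul, counitHead_appendOne]

@[simp] theorem onTail_counitHead_onHead_comul (v : H ⊗[k] B) :
    onTail H (QB.counitHead B) (onHead B QB.comul v) = v := by
  induction v using TensorProduct.induction_on with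
  | zero => simp
  | add x y hx hy => simp only [map_add, hx, hy]
  | tmul b c => simp [onHead_tmul, onTail_counitHead_appendOne]

@[simp] theorem onTail_counitHead_reassoc : onTail H (QB.counitHead H) QB.reassoc = 1 := by
  rw [Algebra.TensorProduct.one_def, ← QB.normal]
  simp [reassoc, tmul_smul]

theorem isUnit_reassoc : IsUnit QB.reassoc :=
  ⟨⟨_, _, QB.reassoc_mul_reassocInv, QB.reassocInv_mul_reassoc⟩, rfl⟩

theorem map_reassocInv_eq_one {F : Type*} [Ring F] [Algebra k F]
    (φ : H ⊗[k] (H ⊗[k] H) →ₐ[k] F) (h : φ QB.reassoc = 1) : φ QB.reassocInv = 1 := by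
  have e := congrArg φ QB.reassoc_mul_reassocInv
  rwa [map_mul, h, one_mul, map_one] at e

@[simp] theorem counitHead_reassoc : QB.counitHead (H ⊗[k] H) QB.reassoc = 1 := by
  have e := congrArg (onTail H (QB.counitHead (H ⊗[k] H))) QB.pentagon_reassoc
  have e₁ : ∀ v : H ⊗[k] (H ⊗[k] H), onTail H (QB.counitHead (H ⊗[k] H)) (includeRight v) =
      (1 : H) ⊗ₜ QB.counitHead (H ⊗[k] H) v := fun v => rfl
  have e₂ : ∀ v : H ⊗[k] (H ⊗[k] H),
      onTail H (QB.counitHead (H ⊗[k] H)) (onTail H (onHead H QB.comul) v) = v := fun v => by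
    induction v using TensorProduct.induction_on_three with
    | zero => simp
    | add x y hx hy => simp only [map_add, hx, hy]
    | tmul a b c => simp
  have e₃ : ∀ v : H ⊗[k] (H ⊗[k] H), onTail H (QB.counitHead (H ⊗[k] H))
      (onTail H (appendOne k H H H) v) =
        appendOne k H H H (onTail H (QB.counitHead H) v) := fun v => by
    induction v using TensorProduct.induction_on_three with
    | zero => simp
    | add x y hx hy => simp only [map_add, hx, hy]
    | tmul a b c => simp [tmul_smul]
  have e₄ : ∀ v : H ⊗[k] (H ⊗[k] H), onTail H (QB.counitHead (H ⊗[k] H))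
      (onTail H (onTail H QB.comul) v) =
        onTail H QB.comul (onTail H (QB.counitHead H) v) := fun v => by
    induction v using TensorProduct.induction_on_three with
    | zero => simp
    | add x y hx hy => simp only [map_add, hx, hy]
    | tmul a b c => simp [tmul_smul]
  simp only [map_mul, e₁, e₂, e₃, e₄, onTail_counitHead_reassoc, map_one, mul_one, one_mul,
    onTail_counitHead_onHead_comul] at e
  have e₅ := QB.isUnit_reassoc.mul_right_cancel (e.trans (one_mul _).symm)
  simpa using congrArg (QB.counitHead (H ⊗[k] H)) e₅

@[simp] theorem onTail_counitLast_reassoc : onTail H (QB.counitLast H) QB.reassoc = 1 := by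
  have e := congrArg (onTail H (onTail H (QB.counitHead H))) QB.pentagon_reassoc
  have e₁ : ∀ v : H ⊗[k] (H ⊗[k] H), onTail H (onTail H (QB.counitHead H)) (includeRight v) =
      (1 : H) ⊗ₜ onTail H (QB.counitHead H) v := fun v => rfl
  have e₂ : ∀ v : H ⊗[k] (H ⊗[k] H),
      onTail H (onTail H (QB.counitHead H)) (onTail H (onHead H QB.comul) v) = v := fun v => by
    induction v using TensorProduct.induction_on_three with
    | zero => simp
    | add x y hx hy => simp only [map_add, hx, hy]
    | tmul a b c => simp
  have e₃ : ∀ v : H ⊗[k] (H ⊗[k] H), onTail H (onTail H (QB.counitHead H))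
      (onTail H (appendOne k H H H) v) =
        appendOne k H H H (onTail H (QB.counitLast H) v) := fun v => by
    induction v using TensorProduct.induction_on_three with
    | zero => simp
    | add x y hx hy => simp only [map_add, hx, hy]
    | tmul a b c => simp [tmul_smul]
  have e₄ : ∀ v : H ⊗[k] (H ⊗[k] H), onTail H (onTail H (QB.counitHead H))
      (onTail H (onTail H QB.comul) v) = v := fun v => by
    induction v using TensorProduct.induction_on_three with
    | zero => simp
    | add x y hx hy => simp only [map_add, hx, hy]
    | tmul a b c => simp
  have e₆ : ∀ v : H ⊗[k] (H ⊗[k] H), onTail H (onTail H (QB.counitHead H))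
      (onHead (H ⊗[k] H) QB.comul v) =
        onHead H QB.comul (onTail H (QB.counitHead H) v) := fun v => by
    induction v using TensorProduct.induction_on_three with
    | zero => simp
    | add x y hx hy => simp only [map_add, hx, hy]
    | tmul a b c =>
      simp only [onHead_tmul_eq_assoc, onTail_tmul, counitHead_tmul]
      induction QB.comul a using TensorProduct.induction_on with
      | zero => simp
      | add x y hx hy => simp only [map_add, add_tmul, hx, hy]
      | tmul x y => simp
  simp only [map_mul, e₁, e₂, e₃, e₄, e₆, onTail_counitHead_reassoc, map_one, mul_one,
    ← Algebra.TensorProduct.one_def, one_mul] at e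
  have e₅ := QB.isUnit_reassoc.mul_left_cancel (e.trans (mul_one _).symm)
  have e₇ : ∀ v : H ⊗[k] H, onTail H (QB.counitLast H) (appendOne k H H H v) = v := fun v => by
    induction v using TensorProduct.induction_on with
    | zero => simp
    | add x y hx hy => simp only [map_add, hx, hy]
    | tmul x y => simp
  simpa [e₇] using congrArg (onTail H (QB.counitLast H)) e₅

@[simp] theorem onTail_counitHead_reassocInv :
    onTail H (QB.counitHead H) QB.reassocInv = 1 :=
  QB.map_reassocInv_eq_one _ QB.onTail_counitHead_reassoc

@[simp] theorem counitHead_reassocInv : QB.counitHead (H ⊗[k] H) QB.reassocInv = 1 :=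
  QB.map_reassocInv_eq_one _ QB.counitHead_reassoc

@[simp] theorem onTail_counitLast_reassocInv :
    onTail H (QB.counitLast H) QB.reassocInv = 1 :=
  QB.map_reassocInv_eq_one _ QB.onTail_counitLast_reassoc

end Counit

section PentagonVariants

theorem map_reassoc_mul_map_reassocInv {F : Type*} [Ring F] [Algebra k F]
    (φ : H ⊗[k] (H ⊗[k] H) →ₐ[k] F) : φ QB.reassoc * φ QB.reassocInv = 1 := by
  rw [← map_mul, reassoc_mul_reassocInv, map_one]

theorem map_reassocInv_mul_map_reassoc {F : Type*} [Ring F] [Algebra k F]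
    (φ : H ⊗[k] (H ⊗[k] H) →ₐ[k] F) : φ QB.reassocInv * φ QB.reassoc = 1 := by
  rw [← map_mul, reassocInv_mul_reassoc, map_one]

theorem appendOne_mul_onHead_mul_onTail :
    onTail H (appendOne k H H H) QB.reassoc * onHead (H ⊗[k] H) QB.comul QB.reassocInv *
        onTail H (onTail H QB.comul) QB.reassocInv =
      onTail H (onHead H QB.comul) QB.reassocInv * includeRight QB.reassocInv := by
  have e := QB.pentagon_reassoc
  have ha := QB.map_reassocInv_mul_map_reassoc
    (includeRight : _ →ₐ[k] H ⊗[k] (H ⊗[k] (H ⊗[k] H)))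
  have hb := QB.map_reassocInv_mul_map_reassoc (onTail H (onHead H QB.comul))
  have hd := QB.map_reassoc_mul_map_reassocInv (onTail H (onTail H QB.comul))
  have hg := QB.map_reassoc_mul_map_reassocInv (onHead (H ⊗[k] H) QB.comul)
  generalize onTail H (appendOne k H H H) QB.reassoc = c at *
  generalize onTail H (onHead H QB.comul) QB.reassoc = b at *
  generalize onTail H (onTail H QB.comul) QB.reassoc = d at *
  generalize onHead (H ⊗[k] H) QB.comul QB.reassoc = g at *
  generalize onTail H (onHead H QB.comul) QB.reassocInv = b' at *
  generalize onTail H (onTail H QB.comul) QB.reassocInv = d' at *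
  generalize onHead (H ⊗[k] H) QB.comul QB.reassocInv = g' at *
  generalize (includeRight : _ →ₐ[k] H ⊗[k] (H ⊗[k] (H ⊗[k] H))) QB.reassoc = a at *
  generalize (includeRight : _ →ₐ[k] H ⊗[k] (H ⊗[k] (H ⊗[k] H))) QB.reassocInv = a' at *
  calc c * g' * d' = (b' * ((a' * a) * b)) * (c * g' * d') := by rw [ha, one_mul, hb, one_mul]
    _ = b' * a' * (a * b * c) * g' * d' := by simp only [mul_assoc]
    _ = b' * a' * (d * (g * g') * d') := by rw [e]; simp only [mul_assoc]
    _ = b' * a' := by rw [hg, mul_one, hd, mul_one]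

theorem appendOne_mul_onHead_mul_onTail_mul_includeRight :
    onTail H (appendOne k H H H) QB.reassoc * onHead (H ⊗[k] H) QB.comul QB.reassocInv *
        onTail H (onTail H QB.comul) QB.reassocInv * includeRight QB.reassoc =
      onTail H (onHead H QB.comul) QB.reassocInv := by
  rw [appendOne_mul_onHead_mul_onTail, mul_assoc, map_reassocInv_mul_map_reassoc, mul_one]

theorem appendOne_reassocInv_mul_onTail :
    onTail H (appendOne k H H H) QB.reassocInv * onTail H (onHead H QB.comul) QB.reassocInv =
      onHead (H ⊗[k] H) QB.comul QB.reassocInv * onTail H (onTail H QB.comul) QB.reassocInv *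
        includeRight QB.reassoc := by
  rw [← appendOne_mul_onHead_mul_onTail_mul_includeRight, mul_assoc, mul_assoc, ← mul_assoc,
    map_reassocInv_mul_map_reassoc, one_mul, mul_assoc]

end PentagonVariants

end QuasiBialgebra

namespace TensorProduct

section FourLegs

variable {k : Type*} [Field k] {A B C D : Type*} [Ring A] [Algebra k A] [Ring B] [Algebra k B]
  [Ring C] [Algebra k C] [Ring D] [Algebra k D] (x y z : A ⊗[k] (B ⊗[k] (C ⊗[k] D)))

@[simp] theorem mul_zero_fourLegs : x * 0 = 0 := mul_zero x

@[simp] theorem zero_mul_fourLegs : 0 * x = 0 := zero_mul x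

theorem mul_add_fourLegs : x * (y + z) = x * y + x * z :=
  Distrib.left_distrib x y z

theorem add_mul_fourLegs : (x + y) * z = x * z + y * z :=
  Distrib.right_distrib x y z

theorem mul_assoc_fourLegs : x * y * z = x * (y * z) :=
  Semigroup.mul_assoc x y z

end FourLegs

end TensorProduct

namespace QuasiHopfAlgebra

open Algebra.TensorProduct (includeLeft includeRight)

variable {k : Type*} [Field k] {H : Type*} [Ring H] [Algebra k H] (QH : QuasiHopfAlgebra k H)

theorem Sinv_mul (g h : H) : QH.Sinv (g * h) = QH.Sinv h * QH.Sinv g := by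
  rw [← QH.Sinv_S (QH.Sinv h * QH.Sinv g), QH.S_mul, QH.S_Sinv, QH.S_Sinv]

theorem Sinv_one : QH.Sinv 1 = 1 := by
  rw [← QH.S_one, QH.Sinv_S, QH.S_one]

/-- The map `a ⊗ b ↦ S(b) ⊗ S(a)`. -/
def antipodeSwap : H ⊗[k] H →ₗ[k] H ⊗[k] H :=
  TensorProduct.map QH.S QH.S ∘ₗ (TensorProduct.comm k H H).toLinearMap

/-- The map `a ⊗ b ↦ S⁻¹(b) ⊗ S⁻¹(a)`. -/
def antipodeInvSwap : H ⊗[k] H →ₗ[k] H ⊗[k] H :=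
  TensorProduct.map QH.Sinv QH.Sinv ∘ₗ (TensorProduct.comm k H H).toLinearMap

@[simp] theorem antipodeSwap_tmul (a b : H) :
    QH.antipodeSwap (a ⊗ₜ b) = QH.S b ⊗ₜ QH.S a := rfl

@[simp] theorem antipodeInvSwap_tmul (a b : H) :
    QH.antipodeInvSwap (a ⊗ₜ b) = QH.Sinv b ⊗ₜ QH.Sinv a := rfl

theorem antipodeSwap_mul (u v : H ⊗[k] H) :
    QH.antipodeSwap (u * v) = QH.antipodeSwap v * QH.antipodeSwap u := by
  induction u using TensorProduct.induction_on with
  | zero => simp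
  | add x y hx hy => simp only [map_add, add_mul, mul_add, hx, hy]
  | tmul a b =>
    induction v using TensorProduct.induction_on with
    | zero => simp
    | add x y hx hy => simp only [map_add, add_mul, mul_add, hx, hy]
    | tmul c d => simp [QH.S_mul]

theorem antipodeInvSwap_mul (u v : H ⊗[k] H) :
    QH.antipodeInvSwap (u * v) = QH.antipodeInvSwap v * QH.antipodeInvSwap u := by
  induction u using TensorProduct.induction_on with
  | zero => simp
  | add x y hx hy => simp only [map_add, add_mul, mul_add, hx, hy]
  | tmul a b =>
    induction v using TensorProduct.induction_on with
    | zero => simp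
    | add x y hx hy => simp only [map_add, add_mul, mul_add, hx, hy]
    | tmul c d => simp [QH.Sinv_mul]

@[simp] theorem antipodeInvSwap_antipodeSwap (u : H ⊗[k] H) :
    QH.antipodeInvSwap (QH.antipodeSwap u) = u := by
  induction u using TensorProduct.induction_on with
  | zero => simp
  | add x y hx hy => simp only [map_add, hx, hy]
  | tmul a b => simp [QH.Sinv_S]

/-- The evaluation form `a ⊗ b ↦ S(a) α b`. -/
def evalForm : H ⊗[k] H →ₗ[k] H := sandwich QH.S QH.aE LinearMap.id

/-- The coevaluation form `a ⊗ b ↦ a β S(b)`. -/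
def coevalForm : H ⊗[k] H →ₗ[k] H := sandwich LinearMap.id QH.bE QH.S

@[simp] theorem evalForm_tmul (a b : H) : QH.evalForm (a ⊗ₜ b) = QH.S a * QH.aE * b := rfl

@[simp] theorem coevalForm_tmul (a b : H) : QH.coevalForm (a ⊗ₜ b) = a * QH.bE * QH.S b := rfl

@[simp] theorem evalForm_comul (h : H) : QH.evalForm (QH.comul h) = QH.counit h • QH.aE := by
  simpa [QH.hcomul] using QH.antip_l h

@[simp] theorem coevalForm_comul (h : H) :
    QH.coevalForm (QH.comul h) = QH.counit h • QH.bE := by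
  simpa [QH.hcomul] using QH.antip_r h

theorem evalForm_mul_tmul (v : H ⊗[k] H) (a b : H) :
    QH.evalForm (v * (a ⊗ₜ b)) = QH.S a * QH.evalForm v * b := by
  induction v using TensorProduct.induction_on with
  | zero => simp
  | add x y hx hy => simp only [map_add, add_mul, mul_add, hx, hy]
  | tmul c d => simp [QH.S_mul, mul_assoc]

theorem coevalForm_tmul_mul (v : H ⊗[k] H) (a b : H) :
    QH.coevalForm ((a ⊗ₜ b) * v) = a * QH.coevalForm v * QH.S b := by
  induction v using TensorProduct.induction_on with
  | zero => simp
  | add x y hx hy => simp only [map_add, add_mul, mul_add, hx, hy]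
  | tmul c d => simp [QH.S_mul, mul_assoc]

/-- The form `a ⊗ b ⊗ c ⊗ d ↦ S(b) α c ⊗ S(a) α d`. -/
def evalForm₂ : H ⊗[k] (H ⊗[k] (H ⊗[k] H)) →ₗ[k] H ⊗[k] H :=
  TensorProduct.map QH.evalForm QH.evalForm ∘ₗ
    (TensorProduct.leftComm k H (H ⊗[k] H) H).toLinearMap ∘ₗ
    TensorProduct.map LinearMap.id (TensorProduct.assoc k H H H).symm.toLinearMap

@[simp] theorem evalForm₂_tmul (a b c d : H) :
    QH.evalForm₂ (a ⊗ₜ (b ⊗ₜ (c ⊗ₜ d))) = QH.evalForm (b ⊗ₜ c) ⊗ₜ QH.evalForm (a ⊗ₜ d) := rfl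

theorem evalForm₂_onTail_onHead_mul (w : H ⊗[k] (H ⊗[k] H)) (z : H ⊗[k] (H ⊗[k] (H ⊗[k] H))) :
    QH.evalForm₂ (onTail H (onHead H QH.comul) w * z) =
      QH.evalForm₂ (onTail H (includeRight.comp includeRight)
        (onTail H (QH.counitHead H) w) * z) := by
  induction w using TensorProduct.induction_on_three with
  | zero => simp
  | add x y hx hy => simp only [map_add, add_mul, hx, hy]
  | tmul a b c =>
    induction z using TensorProduct.induction_on_four with
    | zero => simp
    | add x y hx hy => simp only [map_add, mul_add, hx, hy]
    | tmul p q r s =>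
      have e : ∀ v : H ⊗[k] H, QH.evalForm₂
          (onTail H (Algebra.TensorProduct.assoc k k k H H H).toAlgHom (a ⊗ₜ (v ⊗ₜ[k] c)) *
            p ⊗ₜ[k] (q ⊗ₜ[k] (r ⊗ₜ[k] s))) =
          QH.evalForm (v * q ⊗ₜ r) ⊗ₜ QH.evalForm ((a * p) ⊗ₜ (c * s)) := fun v => by
        induction v using TensorProduct.induction_on with
        | zero => simp
        | add x y hx hy => simp only [map_add, add_mul, add_tmul, tmul_add, hx, hy]
        | tmul x y => simp
      refine (e (QH.comul b)).trans ?_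
      rw [evalForm_mul_tmul, evalForm_comul]
      simp [smul_tmul']

theorem evalForm₂_comul_mul (h : H) (z : H ⊗[k] (H ⊗[k] (H ⊗[k] H))) :
    QH.evalForm₂ (onTail H (includeRight.comp includeRight) (QH.comul h) * z) =
      QH.counit h • QH.evalForm₂ z := by
  induction z using TensorProduct.induction_on_four with
  | zero => simp
  | add x y hx hy => simp only [map_add, mul_add, smul_add, hx, hy]
  | tmul p q r s =>
    have e : ∀ v : H ⊗[k] H, QH.evalForm₂
        (onTail H ((includeRight : H ⊗[k] H →ₐ[k] H ⊗[k] (H ⊗[k] H)).comp includeRight) v *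
          p ⊗ₜ[k] (q ⊗ₜ[k] (r ⊗ₜ[k] s))) =
        QH.evalForm (q ⊗ₜ r) ⊗ₜ QH.evalForm (v * (p ⊗ₜ s)) := fun v => by
      induction v using TensorProduct.induction_on with
      | zero => simp
      | add x y hx hy => simp only [map_add, add_mul, tmul_add, hx, hy]
      | tmul x y => simp
    rw [e, evalForm_mul_tmul, evalForm_comul]
    simp

/-- The element `γ` entering the Drinfeld twist. -/
def gammaElt : H ⊗[k] H :=
  QH.evalForm₂ (onTail H (appendOne k H H H) QH.reassoc *
    onHead (H ⊗[k] H) QH.comul QH.reassocInv)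

theorem antipodeSwap_mul_evalForm₂_mul (u v : H ⊗[k] H) (z : H ⊗[k] (H ⊗[k] (H ⊗[k] H))) :
    QH.antipodeSwap u * QH.evalForm₂ z * v =
      QH.evalForm₂ (z * onHead (H ⊗[k] H) (AlgHom.id k (H ⊗[k] H)) (u ⊗ₜ v)) := by
  induction z using TensorProduct.induction_on_four with
  | zero => simp
  | add x y hx hy => simp only [map_add, mul_add, add_mul, add_mul_fourLegs, hx, hy]
  | tmul p q r s =>
    induction u using TensorProduct.induction_on with
    | zero => simp
    | add x y hx hy => simp only [map_add, add_tmul, mul_add_fourLegs, add_mul, hx, hy]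
    | tmul a b =>
      induction v using TensorProduct.induction_on with
      | zero => simp
      | add x y hx hy => simp only [map_add, tmul_add, mul_add, mul_add_fourLegs, hx, hy]
      | tmul c d => simp [onHead_tmul_eq_assoc, QH.S_mul, mul_assoc]

variable (k H) in
/-- The inclusion of the last of four legs. -/
def lastLeg : H →ₐ[k] H ⊗[k] (H ⊗[k] (H ⊗[k] H)) :=
  includeRight.comp (includeRight.comp includeRight)

theorem lastLeg_apply (b : H) : lastLeg k H b = 1 ⊗ₜ (1 ⊗ₜ (1 ⊗ₜ b)) := rfl

/-- Coassociativity applied to the first leg of a two-leg tensor. -/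
theorem appendOne_reassoc_mul_onHead_onHead (v : H ⊗[k] H) :
    onTail H (appendOne k H H H) QH.reassoc * onHead (H ⊗[k] H) QH.comul (onHead H QH.comul v) =
      onTail H (onHead H QH.comul) (onHead H QH.comul v) *
        onTail H (appendOne k H H H) QH.reassoc := by
  induction v using TensorProduct.induction_on with
  | zero => simp
  | add x y hx hy => simp only [map_add, mul_add, add_mul, hx, hy]
  | tmul a b =>
    have e₁ : ∀ w : H ⊗[k] H, onHead (H ⊗[k] H) QH.comul (TensorProduct.assoc k H H H (w ⊗ₜ b)) =
        onTail H (appendOne k H H H) (onHead H QH.comul w) *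
          lastLeg k H b := fun w => by
      induction w using TensorProduct.induction_on with
      | zero => simp
      | add x y hx hy => simp only [map_add, add_tmul, add_mul, hx, hy]
      | tmul c d =>
        rw [assoc_tmul, onHead_tmul_eq_assoc, onHead_tmul_eq_assoc]
        induction QH.comul c using TensorProduct.induction_on with
        | zero => simp
        | add x y hx hy => simp only [map_add, add_tmul, add_mul, hx, hy]
        | tmul x y => simp [lastLeg_apply]
    have e₂ : ∀ w : H ⊗[k] H, onTail H (onHead H QH.comul) (TensorProduct.assoc k H H H (w ⊗ₜ b)) =
        onTail H (appendOne k H H H) (onTail H QH.comul w) *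
          lastLeg k H b := fun w => by
      induction w using TensorProduct.induction_on with
      | zero => simp
      | add x y hx hy => simp only [map_add, add_tmul, add_mul, hx, hy]
      | tmul c d => simp [onHead_tmul, lastLeg_apply]
    have e₃ : ∀ w : H ⊗[k] (H ⊗[k] H), onTail H (appendOne k H H H) w *
        lastLeg k H b =
        lastLeg k H b * onTail H (appendOne k H H H) w := fun w => by
      induction w using TensorProduct.induction_on_three with
      | zero => simp
      | add x y hx hy => simp only [map_add, add_mul, mul_add_fourLegs, hx, hy]
      | tmul c d e => simp [lastLeg_apply]
    rw [onHead_tmul_eq_assoc (D := H), e₁, e₂, ← mul_assoc, ← map_mul,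
      ← QH.onTail_comul_mul_reassoc, map_mul, mul_assoc, mul_assoc, e₃]

/-- The form `a ⊗ b ↦ (S ⊗ S)(Δᵒᵖ(a)) γ Δ(b)`. -/
def gammaForm : H ⊗[k] H →ₗ[k] H ⊗[k] H :=
  sandwich (QH.antipodeSwap ∘ₗ QH.comul.toLinearMap) QH.gammaElt QH.comul.toLinearMap

@[simp] theorem gammaForm_tmul (a b : H) : QH.gammaForm (a ⊗ₜ b) =
    QH.antipodeSwap (QH.comul a) * QH.gammaElt * QH.comul b := rfl

theorem gammaForm_comul (h : H) : QH.gammaForm (QH.comul h) = QH.counit h • QH.gammaElt := by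
  have e : ∀ v : H ⊗[k] H, QH.gammaForm v =
      QH.evalForm₂ (onTail H (appendOne k H H H) QH.reassoc *
        onHead (H ⊗[k] H) QH.comul (QH.reassocInv * onTail H QH.comul v)) := fun v => by
    induction v using TensorProduct.induction_on with
    | zero => simp
    | add x y hx hy => simp only [map_add, mul_add, hx, hy]
    | tmul a b =>
      rw [gammaForm_tmul, gammaElt, antipodeSwap_mul_evalForm₂_mul, onTail_tmul,
        map_mul (onHead (H ⊗[k] H) QH.comul), mul_assoc_fourLegs]
      rfl
  rw [e, QH.reassocInv_mul_onTail_comul, map_mul (onHead (H ⊗[k] H) QH.comul), ← mul_assoc,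
    appendOne_reassoc_mul_onHead_onHead, mul_assoc, evalForm₂_onTail_onHead_mul, QH.onTail_counitHead_onHead_comul,
    evalForm₂_comul_mul, gammaElt]

theorem gammaForm_mul_tmul (v : H ⊗[k] H) (a b : H) : QH.gammaForm (v * (a ⊗ₜ b)) =
    QH.antipodeSwap (QH.comul a) * QH.gammaForm v * QH.comul b := by
  induction v using TensorProduct.induction_on with
  | zero => simp
  | add x y hx hy => simp only [map_add, add_mul, mul_add, hx, hy]
  | tmul c d => simp [antipodeSwap_mul, mul_assoc]

end QuasiHopfAlgebra

namespace QuasiHopfAlgebra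

open Algebra.TensorProduct (includeLeft includeRight)

variable {k : Type*} [Field k] {H : Type*} [Ring H] [Algebra k H] (QH : QuasiHopfAlgebra k H)

theorem coevalForm_tmul_mul_comul (b c h : H) :
    QH.coevalForm (b ⊗ₜ c * QH.comul h) = QH.counit h • QH.coevalForm (b ⊗ₜ c) := by
  rw [coevalForm_tmul_mul, coevalForm_comul]
  simp

theorem gammaForm_comul_mul_tmul (h a b : H) :
    QH.gammaForm (QH.comul h * a ⊗ₜ b) = QH.counit h • QH.gammaForm (a ⊗ₜ b) := by
  rw [gammaForm_mul_tmul, gammaForm_comul]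
  simp

/-- The form `a ⊗ b ⊗ c ↦ (S ⊗ S)(Δᵒᵖ(a)) γ Δ(b β S(c))`, whose value at the inverse
reassociator is the Drinfeld twist. -/
def twistForm : H ⊗[k] (H ⊗[k] H) →ₗ[k] H ⊗[k] H :=
  QH.gammaForm ∘ₗ TensorProduct.map LinearMap.id QH.coevalForm

@[simp] theorem twistForm_tmul (a : H) (v : H ⊗[k] H) :
    QH.twistForm (a ⊗ₜ v) = QH.gammaForm (a ⊗ₜ QH.coevalForm v) := rfl

theorem twistForm_mul_comul (u : H ⊗[k] (H ⊗[k] H)) (h : H) :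
    QH.twistForm u * QH.comul (QH.S h) =
      QH.twistForm (includeRight (includeRight h : H ⊗[k] H) * u) := by
  induction u using TensorProduct.induction_on_three with
  | zero => simp
  | add x y hx hy => simp only [map_add, add_mul, mul_add, hx, hy]
  | tmul a b c => simp [QH.S_mul, mul_assoc]

theorem twistForm_onHead_mul (v : H ⊗[k] H) (u : H ⊗[k] (H ⊗[k] H)) :
    QH.twistForm (onHead H QH.comul v * u) =
      QH.twistForm (includeRight (includeRight (QH.counitHead H v) : H ⊗[k] H) * u) := by
  induction u using TensorProduct.induction_on_three with
  | zero => simp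
  | add x y hx hy => simp only [map_add, mul_add, hx, hy]
  | tmul a b c =>
    induction v using TensorProduct.induction_on with
    | zero => simp
    | add x y hx hy => simp only [map_add, add_mul, hx, hy]
    | tmul p q =>
      have e : ∀ w : H ⊗[k] H, QH.twistForm (appendOne k H H H w * a ⊗ₜ (b ⊗ₜ (q * c))) =
          QH.gammaForm (w * a ⊗ₜ (QH.coevalForm (b ⊗ₜ (q * c)))) := fun w => by
        induction w using TensorProduct.induction_on with
        | zero => simp
        | add x y hx hy => simp only [map_add, add_mul, hx, hy]
        | tmul x y => simp [mul_assoc]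
      have e' := e (QH.comul p)
      rw [gammaForm_comul_mul_tmul] at e'
      rw [onHead_tmul, mul_assoc]
      simpa [tmul_smul] using e'

theorem twistForm_mul_onTail (u : H ⊗[k] (H ⊗[k] H)) (v : H ⊗[k] H) :
    QH.twistForm (u * onTail H QH.comul v) =
      QH.antipodeSwap (QH.comul (QH.counitLast H v)) * QH.twistForm u := by
  induction u using TensorProduct.induction_on_three with
  | zero => simp
  | add x y hx hy => simp only [map_add, add_mul, mul_add, hx, hy]
  | tmul a b c =>
    induction v using TensorProduct.induction_on with
    | zero => simp
    | add x y hx hy => simp only [map_add, add_mul, mul_add, hx, hy]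
    | tmul p q =>
      rw [onTail_tmul, Algebra.TensorProduct.tmul_mul_tmul, twistForm_tmul,
        coevalForm_tmul_mul_comul]
      simp [antipodeSwap_mul, mul_assoc, tmul_smul]

theorem twistForm_reassocInv_mul_comul (h : H) :
    QH.twistForm QH.reassocInv * QH.comul (QH.S h) =
      QH.antipodeSwap (QH.comul h) * QH.twistForm QH.reassocInv := by
  have e := QH.twistForm_mul_onTail QH.reassocInv (QH.comul h)
  rw [QH.reassocInv_mul_onTail_comul, twistForm_onHead_mul, ← twistForm_mul_comul,
    QH.counitHead_comul, QH.counitLast_comul] at e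
  exact e

/-- The form `a ⊗ b ⊗ c ↦ a β S(b) α c`. -/
def zigzagForm : H ⊗[k] (H ⊗[k] H) →ₗ[k] H :=
  sandwich LinearMap.id QH.bE QH.evalForm

@[simp] theorem zigzagForm_tmul (a : H) (v : H ⊗[k] H) :
    QH.zigzagForm (a ⊗ₜ v) = a * QH.bE * QH.evalForm v := rfl

theorem zigzagForm_reassoc : QH.zigzagForm QH.reassoc = 1 := by
  rw [← QH.antip_X]
  simp [QuasiBialgebra.reassoc, mul_assoc]

/-- The form `a ⊗ b ⊗ c ⊗ d ↦ (S ⊗ S)(Δᵒᵖ(a)) γ Δ(b β S(c) α d)`. -/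
def twistEvalForm : H ⊗[k] (H ⊗[k] (H ⊗[k] H)) →ₗ[k] H ⊗[k] H :=
  QH.gammaForm ∘ₗ TensorProduct.map LinearMap.id QH.zigzagForm

@[simp] theorem twistEvalForm_tmul (a : H) (v : H ⊗[k] (H ⊗[k] H)) :
    QH.twistEvalForm (a ⊗ₜ v) = QH.gammaForm (a ⊗ₜ QH.zigzagForm v) := rfl

theorem twistEvalForm_appendOne (u : H ⊗[k] (H ⊗[k] H)) :
    QH.twistEvalForm (onTail H (appendOne k H H H) u) = QH.twistForm u * QH.comul QH.aE := by
  induction u using TensorProduct.induction_on_three with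
  | zero => simp
  | add x y hx hy => simp only [map_add, add_mul, hx, hy]
  | tmul a b c => simp [mul_assoc]

theorem twistEvalForm_includeRight_reassoc :
    QH.twistEvalForm (includeRight QH.reassoc) = QH.gammaElt := by
  rw [Algebra.TensorProduct.includeRight_apply, twistEvalForm_tmul, zigzagForm_reassoc,
    gammaForm_tmul, map_one QH.comul, mul_one, Algebra.TensorProduct.one_def, antipodeSwap_tmul,
    QH.S_one, ← Algebra.TensorProduct.one_def, one_mul]

theorem zigzagForm_mul_onHead (w : H ⊗[k] (H ⊗[k] H)) (v : H ⊗[k] H) :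
    QH.zigzagForm (w * onHead H QH.comul v) = QH.zigzagForm w * QH.counitHead H v := by
  induction w using TensorProduct.induction_on_three with
  | zero => simp
  | add x y hx hy => simp only [map_add, add_mul, hx, hy]
  | tmul b c d =>
    induction v using TensorProduct.induction_on with
    | zero => simp
    | add x y hx hy => simp only [map_add, mul_add, hx, hy]
    | tmul q r =>
      have e : ∀ w : H ⊗[k] H, QH.zigzagForm (b ⊗ₜ (c ⊗ₜ d) * (appendOne k H H H w *
          1 ⊗ₜ (1 ⊗ₜ r))) = QH.coevalForm (b ⊗ₜ c * w) * QH.aE * (d * r) := fun w => by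
        induction w using TensorProduct.induction_on with
        | zero => simp
        | add x y hx hy => simp only [map_add, add_mul, mul_add, hx, hy]
        | tmul x y => simp [mul_assoc, QH.S_mul]
      rw [onHead_tmul, e, coevalForm_tmul_mul_comul]
      simp [mul_assoc]

theorem twistEvalForm_mul_onTail_reassocInv (z : H ⊗[k] (H ⊗[k] (H ⊗[k] H))) :
    QH.twistEvalForm (z * onTail H (onHead H QH.comul) QH.reassocInv) = QH.twistEvalForm z := by
  have e : ∀ w : H ⊗[k] (H ⊗[k] H),
      QH.twistEvalForm (z * onTail H (onHead H QH.comul) w) =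
      QH.twistEvalForm (z * onTail H (includeRight.comp includeRight)
        (onTail H (QH.counitHead H) w)) := fun w => by
    induction w using TensorProduct.induction_on_three with
    | zero => simp
    | add x y hx hy => simp only [map_add, mul_add_fourLegs, hx, hy]
    | tmul p q r =>
      induction z using TensorProduct.induction_on with
      | zero => simp
      | add x y hx hy => simp only [map_add, add_mul_fourLegs, hx, hy]
      | tmul a z =>
        have e' : QH.zigzagForm (z * onHead H QH.comul (q ⊗ₜ r)) =
            QH.zigzagForm (z * includeRight (includeRight (QH.counit q • r) : H ⊗[k] H)) := by
          rw [zigzagForm_mul_onHead, QH.counitHead_tmul]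
          induction z using TensorProduct.induction_on_three with
          | zero => simp
          | add x y hx hy => simp only [map_add, add_mul, hx, hy]
          | tmul x y z =>
            rw [Algebra.TensorProduct.includeRight_apply, Algebra.TensorProduct.includeRight_apply,
              Algebra.TensorProduct.tmul_mul_tmul, Algebra.TensorProduct.tmul_mul_tmul,
              zigzagForm_tmul, zigzagForm_tmul, evalForm_tmul, evalForm_tmul]
            simp only [mul_one, mul_assoc]
        rw [onTail_tmul, onTail_tmul, onTail_tmul, QH.counitHead_tmul,
          Algebra.TensorProduct.tmul_mul_tmul, Algebra.TensorProduct.tmul_mul_tmul,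
          twistEvalForm_tmul, twistEvalForm_tmul, e']
        rfl
  rw [e, QH.onTail_counitHead_reassocInv, map_one]
  exact congrArg QH.twistEvalForm (MulOneClass.mul_one z)

theorem twistEvalForm_onHead_reassocInv_mul (z : H ⊗[k] (H ⊗[k] (H ⊗[k] H))) :
    QH.twistEvalForm (onHead (H ⊗[k] H) QH.comul QH.reassocInv * z) = QH.twistEvalForm z := by
  have e : ∀ w : H ⊗[k] (H ⊗[k] H), QH.twistEvalForm (onHead (H ⊗[k] H) QH.comul w * z) =
      QH.twistEvalForm ((includeRight.comp includeRight) (QH.counitHead (H ⊗[k] H) w) * z) :=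
      fun w => by
    induction z using TensorProduct.induction_on_four with
    | zero => simp
    | add x y hx hy => simp only [map_add, mul_add, hx, hy]
    | tmul a b c d =>
      induction w using TensorProduct.induction_on_three with
      | zero => simp
      | add x y hx hy => simp only [map_add, add_mul, hx, hy]
      | tmul p q r =>
        have e : ∀ w : H ⊗[k] H, QH.twistEvalForm (appendOne k H H (H ⊗[k] H) w *
            a ⊗ₜ (b ⊗ₜ ((q * c) ⊗ₜ (r * d)))) =
            QH.gammaForm (w * a ⊗ₜ (QH.zigzagForm (b ⊗ₜ ((q * c) ⊗ₜ (r * d))))) := fun w => by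
          induction w using TensorProduct.induction_on with
          | zero => simp
          | add x y hx hy => simp only [map_add, add_mul, hx, hy]
          | tmul x y => simp [mul_assoc]
        have e' := e (QH.comul p)
        rw [gammaForm_comul_mul_tmul] at e'
        rw [onHead_tmul, mul_assoc]
        simpa [tmul_smul] using e'
  rw [e, QH.counitHead_reassocInv, map_one, one_mul]

theorem twistEvalForm_onTail_reassocInv_mul (z : H ⊗[k] (H ⊗[k] (H ⊗[k] H))) :
    QH.twistEvalForm (onTail H (onTail H QH.comul) QH.reassocInv * z) = QH.twistEvalForm z := by
  have e : ∀ w : H ⊗[k] (H ⊗[k] H), QH.twistEvalForm (onTail H (onTail H QH.comul) w * z) =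
      QH.twistEvalForm (onTail H includeLeft (onTail H (QH.counitLast H) w) * z) := fun w => by
    induction z using TensorProduct.induction_on_four with
    | zero => simp
    | add x y hx hy => simp only [map_add, mul_add, hx, hy]
    | tmul a b c d =>
      induction w using TensorProduct.induction_on_three with
      | zero => simp
      | add x y hx hy => simp only [map_add, add_mul, hx, hy]
      | tmul p q r =>
        have e' : QH.evalForm (QH.comul r * c ⊗ₜ d) = QH.counit r • QH.evalForm (c ⊗ₜ d) := by
          rw [evalForm_mul_tmul, evalForm_comul]
          simp
        have e'' : QH.zigzagForm (q ⊗ₜ QH.comul r * b ⊗ₜ (c ⊗ₜ d)) =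
            QH.zigzagForm ((QH.counit r • q) ⊗ₜ 1 * b ⊗ₜ (c ⊗ₜ d)) := by
          simp [e']
        rw [onTail_tmul, onTail_tmul, onTail_tmul, onTail_tmul, QH.counitLast_tmul,
          Algebra.TensorProduct.tmul_mul_tmul, twistEvalForm_tmul, e'',
          Algebra.TensorProduct.tmul_mul_tmul p, twistEvalForm_tmul]
        rfl
  rw [e, QH.onTail_counitLast_reassocInv, map_one, one_mul]

theorem twistForm_reassocInv_mul_comul_aE :
    QH.twistForm QH.reassocInv * QH.comul QH.aE = QH.gammaElt := by
  rw [← twistEvalForm_appendOne, ← twistEvalForm_mul_onTail_reassocInv]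
  have e := congrArg QH.twistEvalForm QH.appendOne_reassocInv_mul_onTail
  rw [mul_assoc, twistEvalForm_onHead_reassocInv_mul, twistEvalForm_onTail_reassocInv_mul,
    twistEvalForm_includeRight_reassoc] at e
  exact e

theorem gammaElt_eq_sum : QH.gammaElt =
    ∑ p ∈ range QH.nP, ∑ j ∈ range QH.nQ, ∑ l ∈ range QH.nD,
      (QH.S (QH.X2 p * QH.D2 (QH.x1 j) l) * QH.aE * (QH.X3 p * QH.x2 j)) ⊗ₜ[k]
        (QH.S (QH.X1 p * QH.D1 (QH.x1 j) l) * QH.aE * QH.x3 j) := by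
  simp only [gammaElt, QuasiBialgebra.reassoc, QuasiBialgebra.reassocInv, map_sum, onTail_tmul,
    appendOne_tmul, onHead_tmul_eq_assoc, QH.hcomul, sum_tmul, assoc_tmul]
  simp only [Finset.sum_mul]
  simp only [Finset.mul_sum, map_sum, Algebra.TensorProduct.tmul_mul_tmul, evalForm₂_tmul,
    evalForm_tmul, one_mul]

end QuasiHopfAlgebra

namespace DrinfeldTwist

variable {k : Type*} [Field k] {H : Type*} [Ring H] [Algebra k H] {QH : QuasiHopfAlgebra k H}
  (DT : DrinfeldTwist QH)

/-- The Drinfeld twist as an element of the tensor square. -/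
def twist : H ⊗[k] H := ∑ t ∈ range DT.nf, DT.f1 t ⊗ₜ DT.f2 t

/-- The inverse of the Drinfeld twist as an element of the tensor square. -/
def twistInv : H ⊗[k] H := ∑ t ∈ range DT.nf, DT.g1 t ⊗ₜ DT.g2 t

theorem twist_mul_twistInv : DT.twist * DT.twistInv = 1 := by
  rw [twist, twistInv, Finset.sum_mul_sum]
  simpa [Algebra.TensorProduct.one_def] using DT.f_inv

theorem twistInv_mul_twist : DT.twistInv * DT.twist = 1 := by
  rw [twist, twistInv, Finset.sum_mul_sum]
  simpa [Algebra.TensorProduct.one_def] using DT.inv_f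

theorem twist_eq_twistForm : DT.twist = QH.twistForm QH.reassocInv := by
  rw [twist, DT.h_f, QuasiBialgebra.reassocInv, map_sum]
  refine Finset.sum_congr rfl fun j _ => ?_
  rw [QuasiHopfAlgebra.twistForm_tmul, QuasiHopfAlgebra.gammaForm_tmul,
    QuasiHopfAlgebra.coevalForm_tmul, QH.hcomul (QH.x1 j), map_sum, Finset.sum_mul,
    Finset.sum_mul]
  refine Finset.sum_congr rfl fun l _ => ?_
  rw [QuasiHopfAlgebra.gammaElt_eq_sum]
  simp only [Finset.mul_sum]
  simp only [Finset.sum_mul]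
  simp only [QH.hcomul (_ * _), Finset.mul_sum, QuasiHopfAlgebra.antipodeSwap_tmul,
    Algebra.TensorProduct.tmul_mul_tmul]

theorem twist_mul_comul_S (h : H) :
    DT.twist * QH.comul (QH.S h) = QH.antipodeSwap (QH.comul h) * DT.twist := by
  rw [twist_eq_twistForm, QuasiHopfAlgebra.twistForm_reassocInv_mul_comul]

theorem twist_mul_comul_aE : DT.twist * QH.comul QH.aE = QH.gammaElt := by
  rw [twist_eq_twistForm, QuasiHopfAlgebra.twistForm_reassocInv_mul_comul_aE]

end DrinfeldTwist

namespace QuasiHopfAlgebra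

open Algebra.TensorProduct (includeLeft includeRight)

variable {k : Type*} [Field k] {H : Type*} [Ring H] [Algebra k H] (QH : QuasiHopfAlgebra k H)

/-- The form `a ⊗ b ⊗ c ↦ S(a) α b ⊗ c`. -/
def evalHead : H ⊗[k] (H ⊗[k] H) →ₗ[k] H ⊗[k] H :=
  TensorProduct.map QH.evalForm LinearMap.id ∘ₗ (TensorProduct.assoc k H H H).symm.toLinearMap

@[simp] theorem evalHead_tmul (a b c : H) :
    QH.evalHead (a ⊗ₜ (b ⊗ₜ c)) = (QH.S a * QH.aE * b) ⊗ₜ c := rfl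

theorem evalHead_mul_tmul (u : H ⊗[k] (H ⊗[k] H)) (a : H) (v : H ⊗[k] H) :
    QH.evalHead (u * (a ⊗ₜ v)) = QH.S a ⊗ₜ 1 * QH.evalHead u * v := by
  induction u using TensorProduct.induction_on_three with
  | zero => simp
  | add x y hx hy => simp only [map_add, add_mul, mul_add, hx, hy]
  | tmul b c d =>
    induction v using TensorProduct.induction_on with
    | zero => simp
    | add x y hx hy => simp only [map_add, tmul_add, mul_add, hx, hy]
    | tmul p q => simp [QH.S_mul, mul_assoc]

theorem evalHead_onHead_mul (v : H ⊗[k] H) (u : H ⊗[k] (H ⊗[k] H)) :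
    QH.evalHead (onHead H QH.comul v * u) = 1 ⊗ₜ QH.counitHead H v * QH.evalHead u := by
  induction v using TensorProduct.induction_on with
  | zero => simp
  | add x y hx hy => simp only [map_add, tmul_add, add_mul, hx, hy]
  | tmul p q =>
    induction u using TensorProduct.induction_on_three with
    | zero => simp
    | add x y hx hy => simp only [map_add, mul_add, hx, hy]
    | tmul a b c =>
      have e : ∀ w : H ⊗[k] H, QH.evalHead (appendOne k H H H w * a ⊗ₜ (b ⊗ₜ (q * c))) =
          QH.evalForm (w * a ⊗ₜ b) ⊗ₜ (q * c) := fun w => by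
        induction w using TensorProduct.induction_on with
        | zero => simp
        | add x y hx hy => simp only [map_add, add_mul, add_tmul, hx, hy]
        | tmul x y => simp
      have e' := e (QH.comul p)
      rw [evalForm_mul_tmul, evalForm_comul] at e'
      rw [onHead_tmul, mul_assoc]
      simpa [smul_tmul, tmul_smul] using e'

/-- The element `q_L = ∑ S(x¹) α x² ⊗ x³`. -/
def qElt : H ⊗[k] H := QH.evalHead QH.reassocInv

theorem tmul_mul_qElt (h : H) :
    1 ⊗ₜ h * QH.qElt = QH.evalHead (QH.reassocInv * onTail H QH.comul (QH.comul h)) := by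
  rw [QH.reassocInv_mul_onTail_comul, evalHead_onHead_mul, QH.counitHead_comul, qElt]

theorem aE_tmul_mul_qElt : 1 ⊗ₜ QH.aE * QH.qElt =
    QH.evalForm₂ (onTail H (appendOne k H H H) QH.reassoc *
      onHead (H ⊗[k] H) QH.comul QH.reassocInv *
      onTail H (onTail H QH.comul) QH.reassocInv) := by
  rw [QH.appendOne_mul_onHead_mul_onTail, evalForm₂_onTail_onHead_mul,
    QH.onTail_counitHead_reassocInv, map_one, one_mul, qElt]
  generalize QH.reassocInv = u
  induction u using TensorProduct.induction_on_three with
  | zero => simp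
  | add x y hx hy => simp only [map_add, mul_add, hx, hy]
  | tmul a b c => simp [QH.S_one]

/-- The form `a ⊗ b ⊗ c ↦ Δ(S⁻¹(α c)) (a ⊗ b)`. -/
def evalLast : H ⊗[k] (H ⊗[k] H) →ₗ[k] H ⊗[k] H :=
  sandwichSwap (QH.comul.toLinearMap ∘ₗ QH.Sinv ∘ₗ LinearMap.mulLeft k QH.aE) 1 LinearMap.id ∘ₗ
    (TensorProduct.assoc k H H H).symm.toLinearMap

@[simp] theorem evalLast_tmul (a b c : H) :
    QH.evalLast (a ⊗ₜ (b ⊗ₜ c)) = QH.comul (QH.Sinv (QH.aE * c)) * a ⊗ₜ b := by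
  simp [evalLast]

section Uniqueness

variable {B : Type*} [Ring B] [Algebra k B]

theorem _root_.TensorProduct.sandwichSwap_mul_of_commute {P Q : Type*} [AddCommMonoid P]
    [Module k P] [AddCommMonoid Q] [Module k Q] (l : Q →ₗ[k] B) (T : B) (r : P →ₗ[k] B) {z : B}
    (hz : ∀ p, Commute z (r p)) (v : P ⊗[k] Q) :
    sandwichSwap l T r v * z = sandwichSwap l (T * z) r v := by
  induction v using TensorProduct.induction_on with
  | zero => simp
  | add x y hx hy => simp only [map_add, add_mul, hx, hy]
  | tmul p q => simp only [sandwichSwap_tmul, mul_assoc, (hz p).eq]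

/-- An element which intertwines the coproduct through `S⁻¹` is determined by its product
with `S⁻¹(α)`. -/
theorem eq_of_mul_Sinv_aE_eq (D : H →ₗ[k] B) (e E : H →ₐ[k] B) (hc : ∀ x y, Commute (e x) (E y))
    {T T' : B}
    (hT : ∀ h, T * e (QH.Sinv h) =
      sandwichSwap (D ∘ₗ QH.Sinv) T E.toLinearMap (QH.comul h))
    (hT' : ∀ h, T' * e (QH.Sinv h) =
      sandwichSwap (D ∘ₗ QH.Sinv) T' E.toLinearMap (QH.comul h))
    (h : T * e (QH.Sinv QH.aE) = T' * e (QH.Sinv QH.aE)) : T = T' := by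
  have key : ∀ y, T * e (QH.Sinv y) * e (QH.Sinv QH.aE) =
      T' * e (QH.Sinv y) * e (QH.Sinv QH.aE) := fun y => by
    rw [hT, hT', sandwichSwap_mul_of_commute _ _ _ (hc _), h,
      sandwichSwap_mul_of_commute _ _ _ (hc _)]
  have one : (1 : H) = ∑ j ∈ range QH.nQ,
      QH.Sinv (QH.x2 j * QH.bE * QH.S (QH.x3 j)) * QH.Sinv QH.aE * QH.x1 j := by
    rw [← QH.Sinv_one, ← QH.antip_x, map_sum]
    simp [Sinv_mul, QH.Sinv_S, mul_assoc]
  have expand : ∀ U : B, U = ∑ j ∈ range QH.nQ,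
      U * e (QH.Sinv (QH.x2 j * QH.bE * QH.S (QH.x3 j))) * e (QH.Sinv QH.aE) * e (QH.x1 j) :=
    fun U => by
      have := congrArg (fun y => U * e y) one
      simpa only [map_one, mul_one, map_sum, map_mul, Finset.mul_sum, mul_assoc] using this
  rw [expand T, expand T']
  simp only [key]

end Uniqueness

end QuasiHopfAlgebra

namespace DrinfeldTwist

open Algebra.TensorProduct (includeLeft includeRight)

variable {k : Type*} [Field k] {H : Type*} [Ring H] [Algebra k H] {QH : QuasiHopfAlgebra k H}
  (DT : DrinfeldTwist QH)

theorem comul_mul_twistInv (h : H) : QH.comul h * DT.twistInv =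
    DT.twistInv * QH.antipodeSwap (QH.comul (QH.Sinv h)) := by
  have e := DT.twist_mul_comul_S (QH.Sinv h)
  rw [QH.S_Sinv] at e
  calc QH.comul h * DT.twistInv
      = DT.twistInv * (DT.twist * QH.comul h) * DT.twistInv := by
        rw [← mul_assoc, DT.twistInv_mul_twist, one_mul]
    _ = _ := by
        rw [e, mul_assoc, mul_assoc, DT.twist_mul_twistInv, mul_one]

theorem antipodeInvSwap_mul_comul_mul (v : H ⊗[k] H) (h : H) :
    QH.antipodeInvSwap (v * QH.comul h * DT.twistInv) =
      QH.comul (QH.Sinv h) * QH.antipodeInvSwap (v * DT.twistInv) := by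
  rw [mul_assoc, comul_mul_twistInv, ← mul_assoc, QH.antipodeInvSwap_mul,
    QH.antipodeInvSwap_antipodeSwap]

/-- The element `S⁻¹(q²_L g²) ⊗ S⁻¹(q¹_L g¹)`. -/
def coactionElt : H ⊗[k] H := QH.antipodeInvSwap (QH.qElt * DT.twistInv)

theorem coactionElt_mul_Sinv (h : H) : DT.coactionElt * QH.Sinv h ⊗ₜ 1 =
    sandwichSwap (QH.comul.toLinearMap ∘ₗ QH.Sinv) DT.coactionElt
      includeRight.toLinearMap (QH.comul h) := by
  have e : QH.Sinv h ⊗ₜ 1 = QH.antipodeInvSwap (1 ⊗ₜ h) := by simp [QH.Sinv_one]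
  rw [coactionElt, e, ← QH.antipodeInvSwap_mul, ← mul_assoc, QH.tmul_mul_qElt]
  generalize QH.comul h = v
  induction v using TensorProduct.induction_on with
  | zero => simp
  | add x y hx hy => simp only [map_add, mul_add, add_mul, hx, hy]
  | tmul a b =>
    rw [onTail_tmul, QH.evalHead_mul_tmul, antipodeInvSwap_mul_comul_mul, mul_assoc,
      QH.antipodeInvSwap_mul (QH.S a ⊗ₜ 1)]
    simp [QH.Sinv_one, QH.Sinv_S, QuasiHopfAlgebra.qElt, mul_assoc]

theorem coactionElt_mul_Sinv_aE :
    DT.coactionElt * QH.Sinv QH.aE ⊗ₜ 1 = QH.evalLast QH.reassocInv := by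
  have e : QH.Sinv QH.aE ⊗ₜ 1 = QH.antipodeInvSwap (1 ⊗ₜ QH.aE) := by simp [QH.Sinv_one]
  have e' : ∀ w : H ⊗[k] (H ⊗[k] H), QH.antipodeInvSwap (QH.evalForm₂
      (onTail H (appendOne k H H H) QH.reassoc * onHead (H ⊗[k] H) QH.comul QH.reassocInv *
        onTail H (onTail H QH.comul) w) * DT.twistInv) = QH.evalLast w := fun w => by
    induction w using TensorProduct.induction_on_three with
    | zero => simp
    | add x y hx hy => simp only [map_add, mul_add, add_mul, hx, hy]
    | tmul a b c =>
      have e₂ := QH.antipodeSwap_mul_evalForm₂_mul (a ⊗ₜ b) (QH.comul c)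
        (onTail H (appendOne k H H H) QH.reassoc * onHead (H ⊗[k] H) QH.comul QH.reassocInv)
      have e₃ := DT.twist_mul_comul_S (QH.Sinv (QH.aE * c))
      rw [QH.S_Sinv, map_mul QH.comul, ← mul_assoc, DT.twist_mul_comul_aE] at e₃
      refine (congrArg (fun z => QH.antipodeInvSwap (z * DT.twistInv)) e₂).symm.trans ?_
      rw [← QuasiHopfAlgebra.gammaElt, mul_assoc, mul_assoc, ← mul_assoc QH.gammaElt, e₃,
        mul_assoc, DT.twist_mul_twistInv, mul_one, ← QH.antipodeSwap_mul,
        QH.antipodeInvSwap_antipodeSwap, QH.evalLast_tmul]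
  rw [coactionElt, e, ← QH.antipodeInvSwap_mul, ← mul_assoc, QH.aE_tmul_mul_qElt, e']

theorem counitLast_coactionElt : QH.counitLast H DT.coactionElt = 1 := by
  refine QH.eq_of_mul_Sinv_aE_eq LinearMap.id (AlgHom.id k H) ((Algebra.ofId k H).comp QH.counit)
    (fun x y => (Algebra.commutes (QH.counit y) x).symm) (fun h => ?_) (fun h => ?_) ?_
  · have e : ∀ v : H ⊗[k] H, QH.counitLast H (sandwichSwap (QH.comul.toLinearMap ∘ₗ QH.Sinv)
        DT.coactionElt includeRight.toLinearMap v) =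
        sandwichSwap (LinearMap.id ∘ₗ QH.Sinv) (QH.counitLast H DT.coactionElt)
          ((Algebra.ofId k H).comp QH.counit).toLinearMap v := fun v => by
      induction v using TensorProduct.induction_on with
      | zero => simp
      | add x y hx hy => simp only [map_add, hx, hy]
      | tmul a b => simp [Algebra.ofId_apply, Algebra.algebraMap_eq_smul_one]
    rw [← e, ← coactionElt_mul_Sinv]
    simp
  · have e : ∀ v : H ⊗[k] H, sandwichSwap (LinearMap.id ∘ₗ QH.Sinv) 1
          ((Algebra.ofId k H).comp QH.counit).toLinearMap v =
        QH.Sinv (QH.counitHead H v) := fun v => by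
      induction v using TensorProduct.induction_on with
      | zero => simp
      | add x y hx hy => simp only [map_add, hx, hy]
      | tmul a b => simp [Algebra.ofId_apply, Algebra.algebraMap_eq_smul_one]
    rw [e, QH.counitHead_comul]
    simp
  · have e : ∀ w : H ⊗[k] (H ⊗[k] H), QH.counitLast H (QH.evalLast w) =
        sandwichSwap (QH.Sinv ∘ₗ LinearMap.mulLeft k QH.aE) 1 LinearMap.id
          (onTail H (QH.counitHead H) w) := fun w => by
      induction w using TensorProduct.induction_on_three with
      | zero => simp
      | add x y hx hy => simp only [map_add, hx, hy]
      | tmul a b c => simp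
    have e' := congrArg (QH.counitLast H) DT.coactionElt_mul_Sinv_aE
    rw [e, QH.onTail_counitHead_reassocInv, Algebra.TensorProduct.one_def,
      map_mul (QH.counitLast H)] at e'
    simpa using e'

end DrinfeldTwist

namespace TensorProduct

theorem onHead_tmul_one {k : Type*} [Field k] {A B C D : Type*} [Ring A] [Algebra k A] [Ring B]
    [Algebra k B] [Ring C] [Algebra k C] [Ring D] [Algebra k D] (δ : A →ₐ[k] B ⊗[k] C) (a : A) :
    onHead D δ (a ⊗ₜ 1) = appendOne k B C D (δ a) := by
  rw [onHead_tmul, ← Algebra.TensorProduct.one_def, ← Algebra.TensorProduct.one_def, mul_one]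

end TensorProduct

namespace QuasiHopfAlgebra

open Algebra.TensorProduct (includeLeft includeRight)

variable {k : Type*} [Field k] {H : Type*} [Ring H] [Algebra k H] (QH : QuasiHopfAlgebra k H)

/-- The iterated coproduct `(id ⊗ Δ) ∘ Δ`. -/
def comul₃ : H →ₐ[k] H ⊗[k] (H ⊗[k] H) := (onTail H QH.comul).comp QH.comul

theorem comul₃_apply (h : H) : QH.comul₃ h = onTail H QH.comul (QH.comul h) := rfl

/-- The form `a ⊗ b ⊗ c ⊗ d ↦ (id ⊗ Δ)(Δ(S⁻¹(α d))) (a ⊗ b ⊗ c)`. -/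
def evalLast₃ : H ⊗[k] (H ⊗[k] (H ⊗[k] H)) →ₗ[k] H ⊗[k] (H ⊗[k] H) :=
  sandwichSwap (QH.comul₃.toLinearMap ∘ₗ QH.Sinv ∘ₗ LinearMap.mulLeft k QH.aE) 1 LinearMap.id ∘ₗ
    (TensorProduct.assoc k H (H ⊗[k] H) H).symm.toLinearMap ∘ₗ
    TensorProduct.map LinearMap.id (TensorProduct.assoc k H H H).symm.toLinearMap

@[simp] theorem evalLast₃_tmul (a b c d : H) : QH.evalLast₃ (a ⊗ₜ (b ⊗ₜ (c ⊗ₜ d))) =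
    QH.comul₃ (QH.Sinv (QH.aE * d)) * a ⊗ₜ (b ⊗ₜ c) := by
  simp [evalLast₃]

theorem evalLast₃_mul (z : H ⊗[k] (H ⊗[k] (H ⊗[k] H))) (a b c d : H) :
    QH.comul₃ (QH.Sinv d) * QH.evalLast₃ z * a ⊗ₜ (b ⊗ₜ c) =
      QH.evalLast₃ (z * a ⊗ₜ (b ⊗ₜ (c ⊗ₜ d))) := by
  induction z using TensorProduct.induction_on_four with
  | zero => simp
  | add x y hx hy => simp only [map_add, mul_add, add_mul, add_mul_fourLegs, hx, hy]
  | tmul p q r s => simp [Sinv_mul, mul_assoc]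

theorem evalLast₃_mul_appendOne (z : H ⊗[k] (H ⊗[k] (H ⊗[k] H))) (w : H ⊗[k] (H ⊗[k] H)) :
    QH.evalLast₃ z * w = QH.evalLast₃ (z * onTail H (appendOne k H H H) w) := by
  induction w using TensorProduct.induction_on_three with
  | zero => simp
  | add x y hx hy => simp only [map_add, mul_add, mul_add_fourLegs, hx, hy]
  | tmul a b c =>
    rw [onTail_tmul, appendOne_tmul, ← evalLast₃_mul, Sinv_one, map_one, one_mul]

theorem reassoc_mul_onHead_evalLast (u : H ⊗[k] (H ⊗[k] H)) :
    QH.reassoc * onHead H QH.comul (QH.evalLast u) =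
      QH.evalLast₃ (onTail H (appendOne k H H H) QH.reassoc * onHead (H ⊗[k] H) QH.comul u) := by
  induction u using TensorProduct.induction_on_three with
  | zero => simp
  | add x y hx hy => simp only [map_add, mul_add, hx, hy]
  | tmul a b c =>
    have e : ∀ w : H ⊗[k] (H ⊗[k] H), ∀ v : H ⊗[k] H,
        QH.comul₃ (QH.Sinv (QH.aE * c)) * w * onHead H (AlgHom.id k (H ⊗[k] H)) (v ⊗ₜ b) =
          QH.evalLast₃ (onTail H (appendOne k H H H) w *
            onHead (H ⊗[k] H) (AlgHom.id k (H ⊗[k] H)) (v ⊗ₜ (b ⊗ₜ c))) := fun w v => by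
      induction v using TensorProduct.induction_on with
      | zero => simp
      | add x y hx hy => simp only [map_add, add_tmul, mul_add, hx, hy]
      | tmul p q =>
        induction w using TensorProduct.induction_on_three with
        | zero => simp
        | add x y hx hy => simp only [map_add, mul_add, add_mul, hx, hy]
        | tmul x y z => simp [onHead_tmul_eq_assoc, mul_assoc]
    rw [evalLast_tmul, map_mul (onHead H QH.comul), ← mul_assoc, ← QH.onTail_comul_mul_reassoc]
    exact e QH.reassoc (QH.comul a)

theorem evalLast₃_onTail_onHead (u : H ⊗[k] (H ⊗[k] H)) :
    QH.evalLast₃ (onTail H (onHead H QH.comul) u) = onTail H QH.comul (QH.evalLast u) := by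
  induction u using TensorProduct.induction_on_three with
  | zero => simp
  | add x y hx hy => simp only [map_add, hx, hy]
  | tmul a b c =>
    have e : ∀ v : H ⊗[k] H,
        QH.evalLast₃ (a ⊗ₜ onHead H (AlgHom.id k (H ⊗[k] H)) (v ⊗ₜ c)) =
          QH.comul₃ (QH.Sinv (QH.aE * c)) * a ⊗ₜ v := fun v => by
      induction v using TensorProduct.induction_on with
      | zero => simp
      | add x y hx hy => simp only [map_add, add_tmul, tmul_add, mul_add, hx, hy]
      | tmul p q => simp [onHead_tmul_eq_assoc]
    rw [evalLast_tmul, map_mul (onTail H QH.comul)]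
    exact e (QH.comul b)

end QuasiHopfAlgebra

namespace DrinfeldTwist

open Algebra.TensorProduct (includeLeft includeRight)

variable {k : Type*} [Field k] {H : Type*} [Ring H] [Algebra k H] {QH : QuasiHopfAlgebra k H}
  (DT : DrinfeldTwist QH)

theorem coactionElt_mul_Sinv_aE_mul (c : H) : DT.coactionElt * QH.Sinv (QH.aE * c) ⊗ₜ 1 =
    QH.evalLast (QH.reassocInv * 1 ⊗ₜ QH.comul c) := by
  have e : ∀ v : H ⊗[k] H, sandwichSwap (QH.comul.toLinearMap ∘ₗ QH.Sinv)
      (QH.evalLast QH.reassocInv)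
      includeRight.toLinearMap v = QH.evalLast (QH.reassocInv * 1 ⊗ₜ v) := fun v => by
    induction v using TensorProduct.induction_on with
    | zero => simp
    | add x y hx hy => simp only [map_add, tmul_add, mul_add, hx, hy]
    | tmul p q =>
      rw [sandwichSwap_tmul]
      generalize QH.reassocInv = u
      induction u using TensorProduct.induction_on_three with
      | zero => simp
      | add x y hx hy => simp only [map_add, mul_add, add_mul, hx, hy]
      | tmul x y z => simp [QuasiHopfAlgebra.Sinv_mul, mul_assoc]
  have hc : ∀ p : H, Commute (QH.Sinv QH.aE ⊗ₜ[k] (1 : H)) (includeRight p) := fun p => by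
    simp [commute_iff_eq]
  rw [← e, ← coactionElt_mul_Sinv_aE, ← sandwichSwap_mul_of_commute _ _ _ hc,
    ← coactionElt_mul_Sinv, mul_assoc, Algebra.TensorProduct.tmul_mul_tmul, mul_one, QH.Sinv_mul]

/-- The threefold analogue of `coactionElt`. -/
def coactionElt₃ : H ⊗[k] (H ⊗[k] H) :=
  QH.reassoc * onHead H QH.comul DT.coactionElt * appendOne k H H H DT.coactionElt

/-- The form `a ⊗ b ⊗ c ↦ (id ⊗ Δ)(Δ(S⁻¹(c))) W (1 ⊗ a ⊗ b)`, where `W` is `coactionElt₃`. -/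
def coactionForm : H ⊗[k] (H ⊗[k] H) →ₗ[k] H ⊗[k] (H ⊗[k] H) :=
  sandwichSwap (QH.comul₃.toLinearMap ∘ₗ QH.Sinv) DT.coactionElt₃ includeRight.toLinearMap ∘ₗ
    (TensorProduct.assoc k H H H).symm.toLinearMap

theorem coactionForm_tmul (a b c : H) : DT.coactionForm (a ⊗ₜ (b ⊗ₜ c)) =
    QH.comul₃ (QH.Sinv c) * DT.coactionElt₃ * 1 ⊗ₜ (a ⊗ₜ b) := rfl

theorem coactionForm_mul (u : H ⊗[k] (H ⊗[k] H)) (w : H ⊗[k] H) (c : H) :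
    DT.coactionForm (u * onHead H (AlgHom.id k (H ⊗[k] H)) (w ⊗ₜ c)) =
      QH.comul₃ (QH.Sinv c) * DT.coactionForm u * 1 ⊗ₜ w := by
  induction w using TensorProduct.induction_on with
  | zero => simp
  | add x y hx hy => simp only [map_add, add_tmul, tmul_add, mul_add, hx, hy]
  | tmul p q =>
    induction u using TensorProduct.induction_on_three with
    | zero => simp
    | add x y hx hy => simp only [map_add, mul_add, add_mul, hx, hy]
    | tmul x y z =>
      rw [onHead_tmul_eq_assoc, AlgHom.id_apply, assoc_tmul, Algebra.TensorProduct.tmul_mul_tmul,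
        Algebra.TensorProduct.tmul_mul_tmul, coactionForm_tmul, coactionForm_tmul, QH.Sinv_mul]
      simp only [mul_assoc, map_mul, Algebra.TensorProduct.tmul_mul_tmul, one_mul]

theorem reassoc_mul_coactionElt_mul_comul (h : H) :
    QH.reassoc * onHead H QH.comul DT.coactionElt *
      appendOne k H H H (QH.comul (QH.Sinv h) * DT.coactionElt) =
        DT.coactionForm (includeRight (QH.comul h)) := by
  have e : ∀ v : H ⊗[k] H, QH.reassoc * onHead H QH.comul
      (sandwichSwap (QH.comul.toLinearMap ∘ₗ QH.Sinv) DT.coactionElt includeRight.toLinearMap v) *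
      appendOne k H H H DT.coactionElt = DT.coactionForm (includeRight v) := fun v => by
    induction v using TensorProduct.induction_on with
    | zero => simp
    | add x y hx hy => simp only [map_add, mul_add, add_mul, hx, hy]
    | tmul a b =>
      have hc : ∀ w : H ⊗[k] H, (1 : H) ⊗ₜ[k] ((1 : H) ⊗ₜ[k] a) * appendOne k H H H w =
          appendOne k H H H w * 1 ⊗ₜ (1 ⊗ₜ a) := fun w => by
        induction w using TensorProduct.induction_on with
        | zero => simp
        | add x y hx hy => simp only [map_add, mul_add, add_mul, hx, hy]
        | tmul p q => simp
      rw [sandwichSwap_tmul, map_mul, map_mul, ← mul_assoc, ← mul_assoc]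
      have e₁ := QH.onTail_comul_mul_reassoc (QH.Sinv b)
      have e₂ : onHead H QH.comul ((includeRight : H →ₐ[k] H ⊗[k] H).toLinearMap a) =
          1 ⊗ₜ (1 ⊗ₜ a) := by
        simp [onHead_tmul]
      rw [e₂, mul_assoc _ _ (appendOne k H H H DT.coactionElt), hc]
      refine (congrArg (fun z => z * onHead H QH.comul DT.coactionElt *
        (appendOne k H H H DT.coactionElt * 1 ⊗ₜ (1 ⊗ₜ a))) e₁.symm).trans ?_
      rw [Algebra.TensorProduct.includeRight_apply, coactionForm_tmul, coactionElt₃,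
        QH.comul₃_apply]
      simp only [mul_assoc]
  rw [← e, ← coactionElt_mul_Sinv, map_mul, map_mul, onHead_tmul_one]
  simp only [mul_assoc]

theorem coactionElt₃_mul_Sinv (h : H) : DT.coactionElt₃ * QH.Sinv h ⊗ₜ 1 =
    DT.coactionForm (onTail H QH.comul (QH.comul h)) := by
  have e : ∀ v : H ⊗[k] H, QH.reassoc * onHead H QH.comul DT.coactionElt * appendOne k H H H
      (sandwichSwap (QH.comul.toLinearMap ∘ₗ QH.Sinv) DT.coactionElt includeRight.toLinearMap v) =
      DT.coactionForm (onTail H QH.comul v) := fun v => by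
    induction v using TensorProduct.induction_on with
    | zero => simp
    | add x y hx hy => simp only [map_add, mul_add, hx, hy]
    | tmul a b =>
      have e₁ : ∀ w : H ⊗[k] H, DT.coactionForm (includeRight w) * 1 ⊗ₜ (a ⊗ₜ 1) =
          DT.coactionForm (a ⊗ₜ w) := fun w => by
        induction w using TensorProduct.induction_on with
        | zero => simp
        | add x y hx hy => simp only [map_add, tmul_add, add_mul, hx, hy]
        | tmul p q =>
          rw [Algebra.TensorProduct.includeRight_apply, coactionForm_tmul, coactionForm_tmul,
            mul_assoc]
          simp
      rw [onTail_tmul, ← e₁, ← reassoc_mul_coactionElt_mul_comul, sandwichSwap_tmul, map_mul,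
        ← mul_assoc]
      rfl
  rw [← e, ← coactionElt_mul_Sinv, map_mul, ← mul_assoc]
  rfl

theorem coactionForm_mul_Sinv (u : H ⊗[k] (H ⊗[k] H)) (h : H) :
    DT.coactionForm u * QH.Sinv h ⊗ₜ 1 =
      DT.coactionForm (onTail H QH.comul (QH.comul h) * u) := by
  induction u using TensorProduct.induction_on_three with
  | zero => simp
  | add x y hx hy => simp only [map_add, mul_add, add_mul, hx, hy]
  | tmul a b c =>
    have hc : (1 : H) ⊗ₜ[k] (a ⊗ₜ[k] b) * QH.Sinv h ⊗ₜ 1 =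
        QH.Sinv h ⊗ₜ 1 * 1 ⊗ₜ (a ⊗ₜ b) := by
      simp
    have e := DT.coactionForm_mul (onTail H QH.comul (QH.comul h)) (a ⊗ₜ b) c
    rw [← coactionElt₃_mul_Sinv] at e
    rw [coactionForm_tmul, mul_assoc, hc]
    refine Eq.trans ?_ e.symm
    simp only [mul_assoc]

theorem coactionElt₃_mul_Sinv_aE : DT.coactionElt₃ * QH.Sinv QH.aE ⊗ₜ 1 =
    QH.evalLast₃ (onTail H (appendOne k H H H) QH.reassoc *
      onHead (H ⊗[k] H) QH.comul QH.reassocInv *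
      onTail H (onTail H QH.comul) QH.reassocInv) := by
  have e : ∀ u : H ⊗[k] (H ⊗[k] H),
      QH.reassoc * onHead H QH.comul DT.coactionElt * appendOne k H H H (QH.evalLast u) =
      QH.evalLast₃ (onTail H (appendOne k H H H) QH.reassoc *
        onHead (H ⊗[k] H) QH.comul QH.reassocInv * onTail H (onTail H QH.comul) u) := fun u => by
    induction u using TensorProduct.induction_on_three with
    | zero => simp
    | add x y hx hy => simp only [map_add, mul_add, hx, hy]
    | tmul a b c =>
      have e₁ : onHead H QH.comul DT.coactionElt *
          appendOne k H H H (QH.comul (QH.Sinv (QH.aE * c))) =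
          onHead H QH.comul (QH.evalLast (QH.reassocInv * 1 ⊗ₜ QH.comul c)) := by
        rw [← DT.coactionElt_mul_Sinv_aE_mul, map_mul (onHead H QH.comul), onHead_tmul_one]
      have e₂ : onHead (H ⊗[k] H) QH.comul (1 ⊗ₜ QH.comul c) *
          onTail H (appendOne k H H H) (appendOne k H H H (a ⊗ₜ b)) =
            onTail H (onTail H QH.comul) (a ⊗ₜ (b ⊗ₜ c)) := by
        rw [appendOne_tmul, onTail_tmul, appendOne_tmul, onTail_tmul, onTail_tmul, onHead_tmul,
          map_one, map_one, one_mul, Algebra.TensorProduct.tmul_mul_tmul, one_mul,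
          Algebra.TensorProduct.tmul_mul_tmul, one_mul, ← Algebra.TensorProduct.one_def, mul_one]
      rw [QH.evalLast_tmul, map_mul (appendOne k H H H), ← mul_assoc, mul_assoc QH.reassoc, e₁,
        QH.reassoc_mul_onHead_evalLast, QH.evalLast₃_mul_appendOne,
        map_mul (onHead (H ⊗[k] H) QH.comul), ← e₂]
      simp only [mul_assoc, mul_assoc_fourLegs]
  rw [← e, ← coactionElt_mul_Sinv_aE, map_mul, ← mul_assoc]
  rfl

theorem coactionForm_mul_Sinv_aE (u : H ⊗[k] (H ⊗[k] H)) :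
    DT.coactionForm u * QH.Sinv QH.aE ⊗ₜ 1 =
    QH.evalLast₃ (onTail H (appendOne k H H H) QH.reassoc *
      onHead (H ⊗[k] H) QH.comul QH.reassocInv *
      onTail H (onTail H QH.comul) QH.reassocInv * includeRight u) := by
  induction u using TensorProduct.induction_on_three with
  | zero => simp
  | add x y hx hy => simp only [map_add, mul_add, add_mul, hx, hy]
  | tmul a b c =>
    have hc : (1 : H) ⊗ₜ[k] (a ⊗ₜ[k] b) * QH.Sinv QH.aE ⊗ₜ 1 =
        QH.Sinv QH.aE ⊗ₜ 1 * 1 ⊗ₜ (a ⊗ₜ b) := by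
      simp
    rw [Algebra.TensorProduct.includeRight_apply, ← QH.evalLast₃_mul, ← DT.coactionElt₃_mul_Sinv_aE,
      coactionForm_tmul, mul_assoc, hc]
    simp only [mul_assoc]

theorem coactionForm_reassoc :
    DT.coactionForm QH.reassoc = onTail H QH.comul DT.coactionElt := by
  refine QH.eq_of_mul_Sinv_aE_eq QH.comul₃.toLinearMap includeLeft (includeRight.comp QH.comul)
    (fun x y => ?_) (fun h => ?_) (fun h => ?_) ?_
  · simp [commute_iff_eq]
  · rw [Algebra.TensorProduct.includeLeft_apply, coactionForm_mul_Sinv, QH.onTail_comul_mul_reassoc]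
    generalize QH.comul h = v
    induction v using TensorProduct.induction_on with
    | zero => simp
    | add x y hx hy => simp only [map_add, mul_add, hx, hy]
    | tmul a b => exact DT.coactionForm_mul QH.reassoc (QH.comul a) b
  · have e := congrArg (onTail H QH.comul) (DT.coactionElt_mul_Sinv h)
    rw [map_mul (onTail H QH.comul), onTail_tmul, map_one] at e
    refine e.trans ?_
    generalize QH.comul h = v
    induction v using TensorProduct.induction_on with
    | zero => simp
    | add x y hx hy => simp only [map_add, hx, hy]
    | tmul a b => simp [QuasiHopfAlgebra.comul₃_apply]
  · have e := congrArg (onTail H QH.comul) DT.coactionElt_mul_Sinv_aE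
    rw [map_mul (onTail H QH.comul), onTail_tmul, map_one, ← QH.evalLast₃_onTail_onHead,
      ← QH.appendOne_mul_onHead_mul_onTail_mul_includeRight, ← coactionForm_mul_Sinv_aE] at e
    exact e.symm

end DrinfeldTwist

namespace RightComoduleAlgebra

open Algebra.TensorProduct (includeLeft includeRight)

variable {k : Type*} [Field k] {H : Type*} [Ring H] [Algebra k H] {QB : QuasiBialgebra k H}
  {A : Type*} [Ring A] [Algebra k A] (CA : RightComoduleAlgebra QB A)

/-- The reassociator of a right comodule algebra. -/
def reassoc : A ⊗[k] (H ⊗[k] H) :=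
  ∑ s ∈ range CA.nP, CA.P1 s ⊗ₜ (CA.P2 s ⊗ₜ CA.P3 s)

theorem reassoc_mul_onHead_rho (a : A) : CA.reassoc * onHead H CA.rho (CA.rho a) =
    onTail A QB.comul (CA.rho a) * CA.reassoc := by
  have e := CA.rca1 a
  simp only [reassoc, CA.hrho, QB.hcomul, map_sum, onHead_tmul_eq_assoc, onTail_tmul, sum_tmul,
    tmul_sum, assoc_tmul, Algebra.TensorProduct.tmul_mul_tmul, Finset.sum_mul, Finset.mul_sum]
  exact (Finset.sum_rotate_three _ _ _ _).symm.trans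
    (e.trans (Finset.sum_rotate_three _ _ _ _).symm)

theorem pentagon_reassoc :
    includeRight QB.reassoc * onTail A (onHead H QB.comul) CA.reassoc *
        onTail A (appendOne k H H H) CA.reassoc =
      onTail A (onTail H QB.comul) CA.reassoc * onHead (H ⊗[k] H) CA.rho CA.reassoc := by
  have e := CA.rca2
  simp only [reassoc, QuasiBialgebra.reassoc, QB.hcomul, CA.hrho, map_sum, onTail_tmul,
    Algebra.TensorProduct.includeRight_apply,
    onHead_tmul_eq_assoc, sum_tmul, tmul_sum, assoc_tmul, appendOne_tmul, Finset.sum_mul,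
    Finset.mul_sum, Algebra.TensorProduct.tmul_mul_tmul, one_mul, mul_one]
  exact (Finset.sum_swap_outer_inner _ _ _ _ _).trans
    (e.trans ((Finset.sum_rotate_four _ _ _ _ _).trans (Finset.sum_rotate_four _ _ _ _ _)))

theorem onTail_counitHead_reassoc : onTail A (QB.counitHead H) CA.reassoc = 1 := by
  rw [Algebra.TensorProduct.one_def, ← CA.rca4a]
  simp [reassoc, tmul_smul]

theorem counitLast_rho (a : A) : QB.counitLast A (CA.rho a) = a := by
  simpa [CA.hrho] using CA.rca3 a

end RightComoduleAlgebra

namespace TensorProduct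

open Algebra.TensorProduct (includeLeft includeRight)

variable {k : Type*} [Field k] (H A C : Type*) [Ring H] [Algebra k H] [Ring A] [Algebra k A]
  [Ring C] [Algebra k C]

/-- The algebra map `h ⊗ c ↦ (h ⊗ 1) ⊗ c`. -/
def leftLegs : H ⊗[k] C →ₐ[k] (H ⊗[k] A) ⊗[k] C :=
  Algebra.TensorProduct.map includeLeft (AlgHom.id k C)

/-- The algebra map `a ⊗ c ↦ (1 ⊗ a) ⊗ c`. -/
def rightLegs : A ⊗[k] C →ₐ[k] (H ⊗[k] A) ⊗[k] C :=
  Algebra.TensorProduct.map includeRight (AlgHom.id k C)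

variable {H A C}

@[simp] theorem leftLegs_tmul (h : H) (c : C) :
    leftLegs H A C (h ⊗ₜ[k] c) = (h ⊗ₜ 1) ⊗ₜ c := rfl

@[simp] theorem rightLegs_tmul (a : A) (c : C) :
    rightLegs H A C (a ⊗ₜ[k] c) = (1 ⊗ₜ a) ⊗ₜ c := rfl

theorem leftLegs_mul_rightLegs (a : A) (c : C) :
    leftLegs H A C (1 ⊗ₜ[k] c) * rightLegs H A C (a ⊗ₜ 1) = rightLegs H A C (a ⊗ₜ c) := by
  simp

theorem onHead_leftLegs_tmul {D : Type*} [Ring D] [Algebra k D] (v : H ⊗[k] C) (d : D) :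
    onHead D (AlgHom.id k ((H ⊗[k] A) ⊗[k] C)) (leftLegs H A C v ⊗ₜ d) =
      leftLegs H A (C ⊗[k] D) (onHead D (AlgHom.id k (H ⊗[k] C)) (v ⊗ₜ d)) := by
  induction v using TensorProduct.induction_on with
  | zero => simp
  | add x y hx hy => simp only [map_add, add_tmul, hx, hy]
  | tmul p q => simp [onHead_tmul_eq_assoc]

theorem onHead_rightLegs_tmul {D : Type*} [Ring D] [Algebra k D] (v : A ⊗[k] C) (d : D) :
    onHead D (AlgHom.id k ((H ⊗[k] A) ⊗[k] C)) (rightLegs H A C v ⊗ₜ d) =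
      rightLegs H A (C ⊗[k] D) (onHead D (AlgHom.id k (A ⊗[k] C)) (v ⊗ₜ d)) := by
  induction v using TensorProduct.induction_on with
  | zero => simp
  | add x y hx hy => simp only [map_add, add_tmul, hx, hy]
  | tmul p q => simp [onHead_tmul_eq_assoc]

theorem onTail_leftLegs {D : Type*} [Ring D] [Algebra k D] (δ : C →ₐ[k] D) (v : H ⊗[k] C) :
    onTail (H ⊗[k] A) δ (leftLegs H A C v) = leftLegs H A D (onTail H δ v) := by
  induction v using TensorProduct.induction_on with
  | zero => simp
  | add x y hx hy => simp only [map_add, hx, hy]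
  | tmul p q => simp

theorem onTail_rightLegs {D : Type*} [Ring D] [Algebra k D] (δ : C →ₐ[k] D) (v : A ⊗[k] C) :
    onTail (H ⊗[k] A) δ (rightLegs H A C v) = rightLegs H A D (onTail A δ v) := by
  induction v using TensorProduct.induction_on with
  | zero => simp
  | add x y hx hy => simp only [map_add, hx, hy]
  | tmul p q => simp

theorem map_mul_mulLeft (h : H) (c : C) (x : (H ⊗[k] A) ⊗[k] C) :
    TensorProduct.map (LinearMap.mulLeft k (h ⊗ₜ 1)) (LinearMap.mulLeft k c) x =
      leftLegs H A C (h ⊗ₜ c) * x := by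
  induction x using TensorProduct.induction_on with
  | zero => simp
  | add x y hx hy => simp only [map_add, mul_add, hx, hy]
  | tmul p q => simp

theorem map_mul_mulRight (a : A) (c : C) (x : (H ⊗[k] A) ⊗[k] C) :
    TensorProduct.map (LinearMap.mulRight k (1 ⊗ₜ a)) (LinearMap.mulRight k c) x =
      x * rightLegs H A C (a ⊗ₜ c) := by
  induction x using TensorProduct.induction_on with
  | zero => simp
  | add x y hx hy => simp only [map_add, add_mul, hx, hy]
  | tmul p q => simp

theorem map_mulLeft_mulLeft (c d : C) :
    TensorProduct.map (LinearMap.mulLeft k c) (LinearMap.mulLeft k d) =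
      LinearMap.mulLeft k (c ⊗ₜ[k] d) := by
  ext; simp

theorem map_mulRight_mulRight (c d : C) :
    TensorProduct.map (LinearMap.mulRight k c) (LinearMap.mulRight k d) =
      LinearMap.mulRight k (c ⊗ₜ[k] d) := by
  ext; simp

end TensorProduct

namespace QuasiBialgebra

open Algebra.TensorProduct (includeLeft includeRight)

variable {k : Type*} [Field k] {H : Type*} [Ring H] [Algebra k H] (QB : QuasiBialgebra k H)
  {A : Type*} [Ring A] [Algebra k A]

theorem counitLast_leftLegs (v : H ⊗[k] H) :
    QB.counitLast (H ⊗[k] A) (leftLegs H A H v) = QB.counitLast H v ⊗ₜ 1 := by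
  induction v using TensorProduct.induction_on with
  | zero => simp
  | add x y hx hy => simp only [map_add, add_tmul, hx, hy]
  | tmul p q => simp [smul_tmul']

theorem counitLast_rightLegs (v : A ⊗[k] H) :
    QB.counitLast (H ⊗[k] A) (rightLegs H A H v) = 1 ⊗ₜ QB.counitLast A v := by
  induction v using TensorProduct.induction_on with
  | zero => simp
  | add x y hx hy => simp only [map_add, tmul_add, hx, hy]
  | tmul p q => simp [tmul_smul]

end QuasiBialgebra

namespace DrinfeldTwist

open Algebra.TensorProduct (includeLeft includeRight)

variable {k : Type*} [Field k] {H : Type*} [Ring H] [Algebra k H] {QH : QuasiHopfAlgebra k H}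
  (DT : DrinfeldTwist QH) {A : Type*} [Ring A] [Algebra k A]

variable (A) in
/-- The form `a ⊗ b ⊗ c ↦ Δ(S⁻¹(c)) W (a ⊗ b)`, where `W` is `coactionElt`. -/
def tensorForm : A ⊗[k] (H ⊗[k] H) →ₗ[k] (H ⊗[k] A) ⊗[k] H :=
  sandwichSwap ((leftLegs H A H).toLinearMap ∘ₗ LinearMap.mulRight k DT.coactionElt ∘ₗ
      QH.comul.toLinearMap ∘ₗ QH.Sinv) 1 (rightLegs H A H).toLinearMap ∘ₗ
    (TensorProduct.assoc k A H H).symm.toLinearMap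

theorem tensorForm_tmul (a : A) (b c : H) : DT.tensorForm A (a ⊗ₜ (b ⊗ₜ c)) =
    leftLegs H A H (QH.comul (QH.Sinv c) * DT.coactionElt) * rightLegs H A H (a ⊗ₜ b) := by
  simp [tensorForm]

theorem counitLast_tensorForm (u : A ⊗[k] (H ⊗[k] H)) :
    QH.counitLast (H ⊗[k] A) (DT.tensorForm A u) = sandwichSwap
      ((includeLeft : H →ₐ[k] H ⊗[k] A).toLinearMap ∘ₗ QH.Sinv) 1 includeRight.toLinearMap
      (onTail A (QH.counitHead H) u) := by
  induction u using TensorProduct.induction_on_three with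
  | zero => simp
  | add x y hx hy => simp only [map_add, hx, hy]
  | tmul a b c =>
    rw [tensorForm_tmul, map_mul, QH.counitLast_leftLegs, QH.counitLast_rightLegs, map_mul,
      DT.counitLast_coactionElt, QH.counitLast_comul]
    simp

variable (A) in
/-- The form `a ⊗ w ↦ M(w) a`, where `M` is `coactionForm`. -/
def tensorForm₃ : A ⊗[k] (H ⊗[k] (H ⊗[k] H)) →ₗ[k] (H ⊗[k] A) ⊗[k] (H ⊗[k] H) :=
  sandwichSwap ((leftLegs H A (H ⊗[k] H)).toLinearMap ∘ₗ DT.coactionForm) 1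
    ((rightLegs H A (H ⊗[k] H)).toLinearMap ∘ₗ includeLeft.toLinearMap)

theorem tensorForm₃_tmul (a : A) (w : H ⊗[k] (H ⊗[k] H)) : DT.tensorForm₃ A (a ⊗ₜ w) =
    leftLegs H A (H ⊗[k] H) (DT.coactionForm w) * rightLegs H A (H ⊗[k] H) (a ⊗ₜ 1) := by
  simp [tensorForm₃]

theorem tensorForm₃_tmul_mul (a : A) (w : H ⊗[k] (H ⊗[k] H)) (v : H ⊗[k] H) (c : H) :
    DT.tensorForm₃ A (a ⊗ₜ (w * onHead H (AlgHom.id k (H ⊗[k] H)) (v ⊗ₜ c))) =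
      leftLegs H A (H ⊗[k] H) (QH.comul₃ (QH.Sinv c) * DT.coactionForm w) *
        rightLegs H A (H ⊗[k] H) (a ⊗ₜ v) := by
  rw [tensorForm₃_tmul, coactionForm_mul, map_mul (leftLegs H A (H ⊗[k] H)), mul_assoc,
    leftLegs_mul_rightLegs]

theorem tensorForm₃_pentagon_left (u u' : A ⊗[k] (H ⊗[k] H)) :
    DT.tensorForm₃ A (includeRight QH.reassoc * onTail A (onHead H QH.comul) u *
        onTail A (appendOne k H H H) u') =
      onTail (H ⊗[k] A) QH.comul (DT.tensorForm A u) * rightLegs H A (H ⊗[k] H) u' := by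
  induction u using TensorProduct.induction_on_three with
  | zero => simp
  | add x y hx hy => simp only [map_add, mul_add, add_mul, hx, hy]
  | tmul a b c =>
    induction u' using TensorProduct.induction_on with
    | zero => simp
    | add x y hx hy => simp only [map_add, mul_add, hx, hy]
    | tmul a' v =>
      have e : onHead H QH.comul (b ⊗ₜ c) * appendOne k H H H v =
          onHead H (AlgHom.id k (H ⊗[k] H)) ((QH.comul b * v) ⊗ₜ c) := by
        have e' : appendOne k H H H v = onHead H (AlgHom.id k (H ⊗[k] H)) (v ⊗ₜ 1) :=
          (onHead_tmul_one (AlgHom.id k (H ⊗[k] H)) v).symm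
        have e'' : onHead H QH.comul (b ⊗ₜ c) =
          onHead H (AlgHom.id k (H ⊗[k] H)) (QH.comul b ⊗ₜ c) := rfl
        rw [e', e'', ← map_mul, Algebra.TensorProduct.tmul_mul_tmul, mul_one]
      rw [Algebra.TensorProduct.includeRight_apply, onTail_tmul, onTail_tmul,
        Algebra.TensorProduct.tmul_mul_tmul, Algebra.TensorProduct.tmul_mul_tmul, one_mul,
        mul_assoc QH.reassoc, e, tensorForm₃_tmul_mul, coactionForm_reassoc, tensorForm_tmul,
        map_mul (onTail (H ⊗[k] A) QH.comul), onTail_leftLegs, onTail_rightLegs,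
        map_mul (onTail H QH.comul), onTail_tmul, mul_assoc _ _ (rightLegs H A (H ⊗[k] H) _),
        ← map_mul (rightLegs H A (H ⊗[k] H)), Algebra.TensorProduct.tmul_mul_tmul]
      rfl

section Coaction

variable (CA : RightComoduleAlgebra QH.toQuasiBialgebra A)

/-- The coaction `h ⊗ a ↦ Δ(h) Ω ρ(a)` on the tensor product. -/
def tensorRho : H ⊗[k] A →ₗ[k] (H ⊗[k] A) ⊗[k] H :=
  sandwich ((leftLegs H A H).toLinearMap ∘ₗ QH.comul.toLinearMap)
    (DT.tensorForm A CA.reassoc) ((rightLegs H A H).toLinearMap ∘ₗ CA.rho.toLinearMap)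

theorem tensorRho_tmul (h : H) (a : A) : DT.tensorRho CA (h ⊗ₜ a) =
    leftLegs H A H (QH.comul h) * DT.tensorForm A CA.reassoc * rightLegs H A H (CA.rho a) := rfl

theorem tensorRho_one : DT.tensorRho CA 1 = DT.tensorForm A CA.reassoc := by
  rw [Algebra.TensorProduct.one_def, tensorRho_tmul]
  simp

theorem tensorRho_tmul_mul (h : H) (m : H ⊗[k] A) : DT.tensorRho CA (h ⊗ₜ 1 * m) =
    leftLegs H A H (QH.comul h) * DT.tensorRho CA m := by
  induction m using TensorProduct.induction_on with
  | zero => simp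
  | add x y hx hy => simp only [map_add, mul_add, hx, hy]
  | tmul p q => simp [tensorRho_tmul, mul_assoc]

theorem tensorRho_mul_tmul (a : A) (m : H ⊗[k] A) : DT.tensorRho CA (m * 1 ⊗ₜ a) =
    DT.tensorRho CA m * rightLegs H A H (CA.rho a) := by
  induction m using TensorProduct.induction_on with
  | zero => simp
  | add x y hx hy => simp only [map_add, add_mul, hx, hy]
  | tmul p q => simp [tensorRho_tmul, mul_assoc]

theorem counitLast_tensorRho (m : H ⊗[k] A) :
    QH.counitLast (H ⊗[k] A) (DT.tensorRho CA m) = m := by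
  have e : sandwichSwap ((includeLeft : H →ₐ[k] H ⊗[k] A).toLinearMap ∘ₗ QH.Sinv) 1
      includeRight.toLinearMap (1 : A ⊗[k] H) = 1 := by
    rw [show (1 : A ⊗[k] H) = 1 ⊗ₜ 1 from rfl, sandwichSwap_tmul]
    simp [QH.Sinv_one, Algebra.TensorProduct.one_def]
  induction m using TensorProduct.induction_on with
  | zero => simp
  | add x y hx hy => simp only [map_add, hx, hy]
  | tmul h a =>
    rw [tensorRho_tmul, map_mul, map_mul, QH.counitLast_leftLegs, QH.counitLast_rightLegs,
      counitLast_tensorForm, CA.onTail_counitHead_reassoc, CA.counitLast_rho, QH.counitLast_comul,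
      e]
    simp

/-- The map `m ⊗ h ↦ ρ(m) ⊗ h`, reassociated. -/
def tensorRhoHead : (H ⊗[k] A) ⊗[k] H →ₗ[k] (H ⊗[k] A) ⊗[k] (H ⊗[k] H) :=
  (TensorProduct.assoc k (H ⊗[k] A) H H).toLinearMap ∘ₗ
    TensorProduct.map (DT.tensorRho CA) LinearMap.id

theorem tensorRhoHead_tmul (m : H ⊗[k] A) (h : H) : DT.tensorRhoHead CA (m ⊗ₜ h) =
    onHead H (AlgHom.id k ((H ⊗[k] A) ⊗[k] H)) (DT.tensorRho CA m ⊗ₜ h) := rfl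

theorem tensorRhoHead_leftLegs_mul (v : H ⊗[k] H) (x : (H ⊗[k] A) ⊗[k] H) :
    DT.tensorRhoHead CA (leftLegs H A H v * x) =
      leftLegs H A (H ⊗[k] H) (onHead H QH.comul v) * DT.tensorRhoHead CA x := by
  induction v using TensorProduct.induction_on with
  | zero => simp
  | add x y hx hy => simp only [map_add, add_mul, hx, hy]
  | tmul p q =>
    induction x using TensorProduct.induction_on with
    | zero => simp
    | add x y hx hy => simp only [map_add, mul_add, hx, hy]
    | tmul m c =>
      have e := onHead_leftLegs_tmul (A := A) (QH.comul p) q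
      rw [leftLegs_tmul, Algebra.TensorProduct.tmul_mul_tmul, tensorRhoHead_tmul,
        tensorRho_tmul_mul, tensorRhoHead_tmul, ← Algebra.TensorProduct.tmul_mul_tmul, map_mul, e]
      rfl

theorem tensorRhoHead_mul_rightLegs (w : A ⊗[k] H) (x : (H ⊗[k] A) ⊗[k] H) :
    DT.tensorRhoHead CA (x * rightLegs H A H w) =
      DT.tensorRhoHead CA x * rightLegs H A (H ⊗[k] H) (onHead H CA.rho w) := by
  induction w using TensorProduct.induction_on with
  | zero => simp
  | add x y hx hy => simp only [map_add, mul_add, hx, hy]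
  | tmul p q =>
    induction x using TensorProduct.induction_on with
    | zero => simp
    | add x y hx hy => simp only [map_add, add_mul, hx, hy]
    | tmul m c =>
      have e := onHead_rightLegs_tmul (H := H) (CA.rho p) q
      rw [rightLegs_tmul, Algebra.TensorProduct.tmul_mul_tmul, tensorRhoHead_tmul,
        tensorRho_mul_tmul, tensorRhoHead_tmul, ← Algebra.TensorProduct.tmul_mul_tmul, map_mul, e]
      rfl

theorem tensorRhoHead_one : DT.tensorRhoHead CA 1 =
    onHead H (AlgHom.id k ((H ⊗[k] A) ⊗[k] H)) (DT.tensorForm A CA.reassoc ⊗ₜ 1) := by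
  rw [Algebra.TensorProduct.one_def, tensorRhoHead_tmul, tensorRho_one]

theorem tensorForm₃_pentagon_right (u : A ⊗[k] (H ⊗[k] H)) (a : A) (b c : H) :
    leftLegs H A (H ⊗[k] H) (QH.reassoc *
        onHead H QH.comul (QH.comul (QH.Sinv c) * DT.coactionElt)) *
      onHead H (AlgHom.id k ((H ⊗[k] A) ⊗[k] H)) (DT.tensorForm A u ⊗ₜ 1) *
      rightLegs H A (H ⊗[k] H) (onHead H CA.rho (a ⊗ₜ b)) =
    DT.tensorForm₃ A (onTail A (onTail H QH.comul) u *
      onHead (H ⊗[k] H) CA.rho (a ⊗ₜ (b ⊗ₜ c))) := by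
  induction u using TensorProduct.induction_on_three with
  | zero => simp
  | add x y hx hy => simp only [map_add, add_tmul, mul_add, add_mul, hx, hy]
  | tmul a' b' c' =>
    have e₁ : onHead H (AlgHom.id k ((H ⊗[k] A) ⊗[k] H))
          (DT.tensorForm A (a' ⊗ₜ (b' ⊗ₜ c')) ⊗ₜ 1) =
        leftLegs H A (H ⊗[k] H) (appendOne k H H H (QH.comul (QH.Sinv c') * DT.coactionElt)) *
          rightLegs H A (H ⊗[k] H) (a' ⊗ₜ (b' ⊗ₜ 1)) := by
      rw [tensorForm_tmul, ← mul_one (1 : H), ← Algebra.TensorProduct.tmul_mul_tmul, map_mul,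
        onHead_leftLegs_tmul, onHead_rightLegs_tmul, onHead_tmul_one]
      simp [onHead_tmul_eq_assoc]
    have e₂ : QH.reassoc * onHead H QH.comul (QH.comul (QH.Sinv c) * DT.coactionElt) *
        appendOne k H H H (QH.comul (QH.Sinv c') * DT.coactionElt) =
        QH.comul₃ (QH.Sinv c) * DT.coactionForm (includeRight (QH.comul c')) := by
      rw [← reassoc_mul_coactionElt_mul_comul, map_mul (onHead H QH.comul), ← mul_assoc,
        ← QH.onTail_comul_mul_reassoc, QH.comul₃_apply]
      simp only [mul_assoc]
    have e₃ : ∀ r : A ⊗[k] H,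
        leftLegs H A (H ⊗[k] H)
            (QH.comul₃ (QH.Sinv c) * DT.coactionForm (includeRight (QH.comul c'))) *
          rightLegs H A (H ⊗[k] H) (a' ⊗ₜ (b' ⊗ₜ 1) *
            onHead H (AlgHom.id k (A ⊗[k] H)) (r ⊗ₜ b)) =
        DT.tensorForm₃ A (onTail A (onTail H QH.comul) (a' ⊗ₜ (b' ⊗ₜ c')) *
          onHead (H ⊗[k] H) (AlgHom.id k (A ⊗[k] H)) (r ⊗ₜ (b ⊗ₜ c))) := fun r => by
      induction r using TensorProduct.induction_on with
      | zero => simp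
      | add x y hx hy => simp only [map_add, add_tmul, mul_add, hx, hy]
      | tmul x y =>
        have e₄ : b' ⊗ₜ QH.comul c' * y ⊗ₜ (b ⊗ₜ c) = includeRight (QH.comul c') *
            onHead H (AlgHom.id k (H ⊗[k] H)) (((b' * y) ⊗ₜ b) ⊗ₜ c) := by
          simp [onHead_tmul_eq_assoc]
        rw [onTail_tmul, onTail_tmul, onHead_tmul_eq_assoc, onHead_tmul_eq_assoc,
          AlgHom.id_apply, assoc_tmul, assoc_tmul, Algebra.TensorProduct.tmul_mul_tmul (a' : A),
          Algebra.TensorProduct.tmul_mul_tmul a' x (b' ⊗ₜ QH.comul c'), e₄, tensorForm₃_tmul_mul]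
        simp
    rw [e₁, ← mul_assoc, ← map_mul (leftLegs H A (H ⊗[k] H)), e₂, mul_assoc,
      ← map_mul (rightLegs H A (H ⊗[k] H))]
    exact e₃ (CA.rho a)

theorem reassoc_mul_tensorRhoHead :
    leftLegs H A (H ⊗[k] H) QH.reassoc * DT.tensorRhoHead CA (DT.tensorForm A CA.reassoc) =
      onTail (H ⊗[k] A) QH.comul (DT.tensorForm A CA.reassoc) *
        rightLegs H A (H ⊗[k] H) CA.reassoc := by
  have e : ∀ u : A ⊗[k] (H ⊗[k] H),
      leftLegs H A (H ⊗[k] H) QH.reassoc * DT.tensorRhoHead CA (DT.tensorForm A u) =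
        DT.tensorForm₃ A (onTail A (onTail H QH.comul) CA.reassoc *
          onHead (H ⊗[k] H) CA.rho u) := fun u => by
    induction u using TensorProduct.induction_on_three with
    | zero => simp
    | add x y hx hy => simp only [map_add, mul_add, hx, hy]
    | tmul a b c =>
      rw [← tensorForm₃_pentagon_right, ← tensorRhoHead_one, tensorForm_tmul,
        tensorRhoHead_mul_rightLegs, ← mul_one (leftLegs H A H _), tensorRhoHead_leftLegs_mul,
        map_mul (leftLegs H A (H ⊗[k] H))]
      simp only [mul_assoc]
  rw [e, ← CA.pentagon_reassoc, tensorForm₃_pentagon_left]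

theorem reassoc_mul_tensorRhoHead_tensorRho (m : H ⊗[k] A) :
    leftLegs H A (H ⊗[k] H) QH.reassoc * DT.tensorRhoHead CA (DT.tensorRho CA m) =
      onTail (H ⊗[k] A) QH.comul (DT.tensorRho CA m) * rightLegs H A (H ⊗[k] H) CA.reassoc := by
  induction m using TensorProduct.induction_on with
  | zero => simp
  | add x y hx hy => simp only [map_add, mul_add, add_mul, hx, hy]
  | tmul h a =>
    rw [tensorRho_tmul, tensorRhoHead_mul_rightLegs, tensorRhoHead_leftLegs_mul, ← mul_assoc,
      ← mul_assoc, ← map_mul (leftLegs H A (H ⊗[k] H)), ← QH.onTail_comul_mul_reassoc,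
      map_mul (leftLegs H A (H ⊗[k] H)), mul_assoc (leftLegs H A (H ⊗[k] H) _),
      reassoc_mul_tensorRhoHead, map_mul (onTail (H ⊗[k] A) QH.comul),
      map_mul (onTail (H ⊗[k] A) QH.comul), onTail_leftLegs, onTail_rightLegs, mul_assoc,
      mul_assoc, ← map_mul (rightLegs H A (H ⊗[k] H)), CA.reassoc_mul_onHead_rho,
      map_mul (rightLegs H A (H ⊗[k] H))]
    simp only [mul_assoc]

theorem tensorRho_tmul_eq_sum (h : H) (a : A) : DT.tensorRho CA (h ⊗ₜ a) =
    ∑ i ∈ range QH.nD, ∑ s ∈ range CA.nP, ∑ l ∈ range QH.nD, ∑ j ∈ range QH.nQ,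
      ∑ t ∈ range DT.nf, ∑ r ∈ range CA.nR,
      ((QH.D1 h i * QH.Sinv (QH.x3 j * QH.D2 (CA.P3 s) l * DT.g2 t)) ⊗ₜ[k]
          (CA.P1 s * CA.r0 a r)) ⊗ₜ[k]
        (QH.D2 h i *
          QH.Sinv ((QH.S (QH.x1 j) * QH.aE * QH.x2 j) * QH.D1 (CA.P3 s) l * DT.g1 t) *
          (CA.P2 s * CA.r1 a r)) := by
  have e : ∀ c, QH.comul (QH.Sinv c) * DT.coactionElt =
      ∑ l ∈ range QH.nD, ∑ j ∈ range QH.nQ, ∑ t ∈ range DT.nf,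
        QH.Sinv (QH.x3 j * QH.D2 c l * DT.g2 t) ⊗ₜ
          QH.Sinv ((QH.S (QH.x1 j) * QH.aE * QH.x2 j) * QH.D1 c l * DT.g1 t) := fun c => by
    rw [coactionElt, ← antipodeInvSwap_mul_comul_mul, QH.hcomul, Finset.mul_sum, Finset.sum_mul,
      map_sum]
    refine Finset.sum_congr rfl fun l _ => ?_
    rw [QuasiHopfAlgebra.qElt, QuasiBialgebra.reassocInv, map_sum, Finset.sum_mul, Finset.sum_mul,
      map_sum]
    refine Finset.sum_congr rfl fun j _ => ?_
    rw [twistInv, Finset.mul_sum, map_sum]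
    simp only [QuasiHopfAlgebra.evalHead_tmul, Algebra.TensorProduct.tmul_mul_tmul,
      QuasiHopfAlgebra.antipodeInvSwap_tmul]
  rw [tensorRho_tmul, QH.hcomul, map_sum, Finset.sum_mul, Finset.sum_mul]
  refine Finset.sum_congr rfl fun i _ => ?_
  rw [RightComoduleAlgebra.reassoc, map_sum, Finset.mul_sum, Finset.sum_mul]
  refine Finset.sum_congr rfl fun s _ => ?_
  rw [tensorForm_tmul, e, CA.hrho]
  simp only [map_sum, Finset.sum_mul, Finset.mul_sum]
  simp only [leftLegs_tmul, rightLegs_tmul, Algebra.TensorProduct.tmul_mul_tmul, mul_one, one_mul,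
    mul_assoc]
  exact Finset.sum_rotate_four _ _ _ _ _

/-- The two-sided Hopf module structure on the tensor product. -/
def tensorHopfModule : TwoSidedHopfModule QH.toQuasiBialgebra CA (H ⊗[k] A) where
  ha := LinearMap.mul k (H ⊗[k] A) ∘ₗ includeLeft.toLinearMap
  ha_one m := by simp [← Algebra.TensorProduct.one_def]
  ha_mul g h m := by simp [← mul_assoc]
  ra := (LinearMap.mul k (H ⊗[k] A)).flip ∘ₗ includeRight.toLinearMap
  ra_one m := by simp [← Algebra.TensorProduct.one_def]
  ra_mul a b m := by simp [mul_assoc]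
  ha_ra h a m := by simp [mul_assoc]
  rho := DT.tensorRho CA
  counit_rho m := DT.counitLast_tensorRho CA m
  coassoc_rho m := by
    simp only [map_mulLeft_mulLeft, map_mulRight_mulRight]
    have e := DT.reassoc_mul_tensorRhoHead_tensorRho CA m
    rw [QuasiBialgebra.reassoc, RightComoduleAlgebra.reassoc, map_sum, map_sum, Finset.sum_mul,
      Finset.mul_sum] at e
    simp only [← map_mul_mulLeft, ← map_mul_mulRight] at e
    exact e
  colin_l h m := by
    have e := DT.tensorRho_tmul_mul CA h m
    rw [QH.hcomul, map_sum, Finset.sum_mul] at e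
    simp only [← map_mul_mulLeft] at e
    exact e
  colin_r a m := by
    have e := DT.tensorRho_mul_tmul CA a m
    rw [CA.hrho, map_sum, Finset.mul_sum] at e
    simp only [← map_mul_mulRight] at e
    exact e

end Coaction

end DrinfeldTwist

/-- Let `H` be a quasi-Hopf algebra and `𝔄` a right `H`-comodule
algebra. Then `𝒰 = H ⊗ 𝔄` is a two-sided `(𝔄,H)`-Hopf module with
`h ≻ (h'⊗a) = hh' ⊗ a`, `(h⊗a) ≺ a' = h ⊗ aa'` and
`ρ(h⊗a) = ∑ h₁S⁻¹(q²_L X̃³₂ g²) ⊗ X̃¹ a⟨0⟩ ⊗ h₂S⁻¹(q¹_L X̃³₁ g¹) X̃² a⟨1⟩`,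
where `q_L = ∑ S(x¹)αx² ⊗ x³` and `f⁻¹ = ∑ g¹ ⊗ g²` is the inverse Drinfeld twist. -/
theorem tensor_H_A_is_two_sided_hopf_module
    {k : Type*} [Field k] {H : Type*} [Ring H] [Algebra k H]
    (QH : QuasiHopfAlgebra k H) (DT : DrinfeldTwist QH)
    {A : Type*} [Ring A] [Algebra k A]
    (CA : RightComoduleAlgebra QH.toQuasiBialgebra A) :
    ∃ T : TwoSidedHopfModule QH.toQuasiBialgebra CA (H ⊗[k] A),
      (∀ (h h' : H) (a : A), T.ha h (h' ⊗ₜ[k] a) = (h * h') ⊗ₜ[k] a) ∧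
      (∀ (a' : A) (h : H) (a : A), T.ra a' (h ⊗ₜ[k] a) = h ⊗ₜ[k] (a * a')) ∧
      (∀ (h : H) (a : A), T.rho (h ⊗ₜ[k] a) =
        ∑ i ∈ Finset.range QH.nD, ∑ s ∈ Finset.range CA.nP, ∑ l ∈ Finset.range QH.nD,
          ∑ j ∈ Finset.range QH.nQ, ∑ t ∈ Finset.range DT.nf, ∑ r ∈ Finset.range CA.nR,
          ((QH.D1 h i * QH.Sinv (QH.x3 j * QH.D2 (CA.P3 s) l * DT.g2 t)) ⊗ₜ[k]
              (CA.P1 s * CA.r0 a r)) ⊗ₜ[k]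
            (QH.D2 h i *
              QH.Sinv ((QH.S (QH.x1 j) * QH.aE * QH.x2 j) * QH.D1 (CA.P3 s) l * DT.g1 t) *
              (CA.P2 s * CA.r1 a r))) := by
  refine ⟨DT.tensorHopfModule CA, fun h h' a => ?_, fun a' h a => ?_,
    fun h a => DT.tensorRho_tmul_eq_sum CA h a⟩
  · simp [DrinfeldTwist.tensorHopfModule]
  · simp [DrinfeldTwist.tensorHopfModule]
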